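/- arXiv:2411.14601 — 10 statements merged into one kernel-verified Lean document; each statement's English description precedes it below -/
import Mathlib

section
/- Let f : ℝ^{dx} → ℝ be differentiable, μx-strongly convex and Lx-smooth with Lx > μx ≥ 0, let g : ℝ^{dy} → ℝ be differentiable, μy-strongly convex and Ly-smooth with Ly > μy ≥ 0, and let B ∈ ℝ^{dy×dx} satisfy the spectral assumption with constants Lxy > μxy, μyx ≥ 0. Assume δx := μx + μxy²/Ly > 0 and δy := μy + μyx²/Lx > 0. Then the solution set S := {(x,y) : ∇f(x) + Bᵀy = 0 and ∇g(y) − Bx = 0} is nonempty, and for every (x*,y*) ∈ S one has S = (x* + Vx) × (y* + Vy), where Vx = {0} if μx > 0 and Vx = ker B if μx = 0, and Vy = {0} if μy > 0 and Vy = ker Bᵀ if μy = 0. -/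
open scoped RealInnerProductSpace Matrix

section helpers

lemma aux_coco {E : Type*} [NormedAddCommGroup E] [InnerProductSpace ℝ E]
    (f : E → ℝ) (f' : E → E) (μ L : ℝ) (hμ : 0 ≤ μ) (hL : μ < L)
    (hsc : ∀ x x', μ / 2 * ‖x - x'‖ ^ 2 ≤ f x - f x' - ⟪f' x', x - x'⟫)
    (hsm : ∀ x x', |f x - f x' - ⟪f' x', x - x'⟫| ≤ L / 2 * ‖x - x'‖ ^ 2) (x y : E) :
    ‖f' x - f' y‖ ^ 2 ≤ L * ⟪f' x - f' y, x - y⟫ ∧ μ * ‖x - y‖ ^ 2 ≤ ⟪f' x - f' y, x - y⟫ := by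
  have hL0 : 0 < L := lt_of_le_of_lt hμ hL
  have key : ∀ x y : E, ‖f' x - f' y‖ ^ 2 ≤ 2 * L * (f x - f y - ⟪f' y, x - y⟫) := by
    intro x y
    set d := f' x - f' y with hd
    have h1 := hsc (x - (1 / L) • d) y
    have h2 := (le_abs_self _).trans (hsm (x - (1 / L) • d) x)
    have h0 : 0 ≤ μ / 2 * ‖x - (1 / L) • d - y‖ ^ 2 := by positivity
    have e1 : x - (1 / L) • d - x = -((1 / L) • d) := by abel
    have e2 : x - (1 / L) • d - y = (x - y) - (1 / L) • d := by abel
    rw [e1, inner_neg_right, inner_smul_right, norm_neg, norm_smul, mul_pow] at h2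
    rw [e2] at h0 h1
    rw [inner_sub_right (f' y), inner_smul_right] at h1
    have h3 : ⟪f' x, d⟫ - ⟪f' y, d⟫ = ‖d‖ ^ 2 := by
      rw [← inner_sub_left, ← hd, real_inner_self_eq_norm_sq]
    have h4 : L / 2 * (‖(1 / L : ℝ)‖ ^ 2 * ‖d‖ ^ 2) = (1 / L) * ‖d‖ ^ 2 / 2 := by
      rw [Real.norm_eq_abs, sq_abs]; field_simp
    rw [h4] at h2
    have h5 : (1 / L) * ‖d‖ ^ 2 / 2 ≤ f x - f y - ⟪f' y, x - y⟫ := by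
      have : (1 / L) * ⟪f' x, d⟫ - (1 / L) * ⟪f' y, d⟫ = (1 / L) * ‖d‖ ^ 2 := by
        rw [← h3]; ring
      linarith
    calc ‖d‖ ^ 2 = 2 * L * ((1 / L) * ‖d‖ ^ 2 / 2) := by field_simp
      _ ≤ _ := by gcongr
  have hsum : (f x - f y - ⟪f' y, x - y⟫) + (f y - f x - ⟪f' x, y - x⟫)
      = ⟪f' x - f' y, x - y⟫ := by
    rw [← neg_sub x y, inner_neg_right, inner_sub_left]; ring
  constructor
  · have a := key x y
    have b := key y x
    rw [norm_sub_rev] at b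
    rw [← hsum]; nlinarith
  · have a := hsc x y
    have b := hsc y x
    rw [norm_sub_rev] at b
    rw [← hsum]; linarith

lemma aux_reg {H : Type*} [NormedAddCommGroup H] [InnerProductSpace ℝ H] [CompleteSpace H]
    (G : H → H) (L : ℝ) (hL : 0 ≤ L) (hlip : ∀ z w, ‖G z - G w‖ ≤ L * ‖z - w‖)
    (hmon : ∀ z w, 0 ≤ ⟪G z - G w, z - w⟫) (ε : ℝ) (hε : 0 < ε) :
    ∃ z, G z + ε • z = 0 := by
  set M := L + ε with hM
  have hM0 : 0 < M := by positivity
  set t := ε / M ^ 2 with ht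
  have ht0 : 0 < t := by positivity
  set k := 1 - ε ^ 2 / M ^ 2 with hk
  have hk1 : k < 1 := by have : 0 < ε ^ 2 / M ^ 2 := by positivity
                         linarith
  have hk0 : 0 ≤ k := by
    have : ε ^ 2 / M ^ 2 ≤ 1 := by
      rw [div_le_one (by positivity)]; gcongr; linarith
    linarith
  let T : H → H := fun z => z - t • (G z + ε • z)
  have hT : ContractingWith (Real.toNNReal (√k)) T := by
    constructor
    · rw [Real.toNNReal_lt_one, Real.sqrt_lt' one_pos]; simpa using hk1
    · refine LipschitzWith.of_dist_le_mul fun z w => ?_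
      rw [Real.coe_toNNReal _ (Real.sqrt_nonneg _), dist_eq_norm, dist_eq_norm]
      set u := (G z + ε • z) - (G w + ε • w) with hu
      have e : T z - T w = (z - w) - t • u := by
        simp only [T, hu, smul_sub]; abel
      have hu2 : u = (G z - G w) + ε • (z - w) := by rw [hu, smul_sub]; abel
      have n1 : ‖u‖ ≤ M * ‖z - w‖ := by
        rw [hu2]
        refine (norm_add_le _ _).trans ?_
        rw [norm_smul, Real.norm_eq_abs, abs_of_pos hε]
        have := hlip z w
        rw [hM]; linarith
      have n2 : ε * ‖z - w‖ ^ 2 ≤ ⟪z - w, u⟫ := by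
        rw [hu2, inner_add_right, inner_smul_right, real_inner_self_eq_norm_sq, real_inner_comm]
        have := hmon z w
        linarith
      have n3 : ‖u‖ ^ 2 ≤ M ^ 2 * ‖z - w‖ ^ 2 := by
        rw [← mul_pow]; gcongr
      have : ‖T z - T w‖ ^ 2 ≤ k * ‖z - w‖ ^ 2 := by
        rw [e, norm_sub_sq_real, inner_smul_right, norm_smul, Real.norm_eq_abs, mul_pow, sq_abs]
        have m1 : t * (ε * ‖z - w‖ ^ 2) ≤ t * ⟪z - w, u⟫ := by gcongr
        have m2 : t ^ 2 * ‖u‖ ^ 2 ≤ t ^ 2 * (M ^ 2 * ‖z - w‖ ^ 2) := by gcongr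
        have m3 : t ^ 2 * (M ^ 2 * ‖z - w‖ ^ 2) = ε ^ 2 / M ^ 2 * ‖z - w‖ ^ 2 := by
          rw [ht]; field_simp
        have m4 : t * (ε * ‖z - w‖ ^ 2) = ε ^ 2 / M ^ 2 * ‖z - w‖ ^ 2 := by
          rw [ht]; field_simp
        rw [hk]; linarith
      refine le_of_sq_le_sq ?_ (by positivity)
      rw [mul_pow, Real.sq_sqrt hk0]; exact this
  refine ⟨ContractingWith.fixedPoint T hT, ?_⟩
  have hfp : T (ContractingWith.fixedPoint T hT) = _ := hT.fixedPoint_isFixedPt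
  have : t • (G (ContractingWith.fixedPoint T hT) + ε • ContractingWith.fixedPoint T hT) = 0 := by
    simpa [T, sub_eq_self] using hfp
  exact (smul_eq_zero.mp this).resolve_left ht0.ne'

lemma aux_zero {H : Type*} [NormedAddCommGroup H] [InnerProductSpace ℝ H] [FiniteDimensional ℝ H]
    (G : H → H) (L : ℝ) (hL : 0 ≤ L) (hlip : ∀ z w, ‖G z - G w‖ ≤ L * ‖z - w‖)
    (hmon : ∀ z w, 0 ≤ ⟪G z - G w, z - w⟫) (ε₀ R : ℝ) (hε₀ : 0 < ε₀)
    (hbd : ∀ ε, 0 < ε → ε ≤ ε₀ → ∀ z, G z + ε • z = 0 → ‖z‖ ≤ R) :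
    ∃ z, G z = 0 := by
  have : ProperSpace H := FiniteDimensional.proper ℝ H
  have : CompleteSpace H := FiniteDimensional.complete ℝ H
  have hc : Continuous G := by
    have : LipschitzWith (Real.toNNReal L) G := by
      refine LipschitzWith.of_dist_le_mul fun z w => ?_
      rw [Real.coe_toNNReal _ hL, dist_eq_norm, dist_eq_norm]; exact hlip z w
    exact this.continuous
  have hcl : IsClosed (G '' Metric.closedBall 0 R) :=
    ((isCompact_closedBall (0 : H) R).image hc).isClosed
  have : (0 : H) ∈ G '' Metric.closedBall 0 R := by
    rw [← hcl.closure_eq, Metric.mem_closure_iff]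
    intro δ hδ
    set ε := min ε₀ (δ / (|R| + 1)) with hε
    have hε0 : 0 < ε := lt_min hε₀ (by positivity)
    obtain ⟨z, hz⟩ := aux_reg G L hL hlip hmon ε hε0
    have hzR := hbd ε hε0 (min_le_left _ _) z hz
    refine ⟨G z, ⟨z, by simpa using hzR, rfl⟩, ?_⟩
    rw [dist_zero_left, eq_neg_of_add_eq_zero_left hz, norm_neg, norm_smul, Real.norm_eq_abs,
      abs_of_pos hε0]
    have h1 : ε ≤ δ / (|R| + 1) := min_le_right _ _
    have h2 : ‖z‖ < |R| + 1 := by have := le_abs_self R; linarith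
    calc ε * ‖z‖ < ε * (|R| + 1) := by gcongr
      _ ≤ δ / (|R| + 1) * (|R| + 1) := by gcongr
      _ = δ := by field_simp
  obtain ⟨z, _, hz⟩ := this
  exact ⟨z, hz⟩

lemma aux_side (μ ν L : ℝ) (hμ : 0 ≤ μ) (hν : 0 ≤ ν) (hL : 0 < L) (h : 0 < μ + ν ^ 2 / L) :
    ∃ K : ℝ, 0 ≤ K ∧ ∀ a Q E1 E2 S d b ε : ℝ, 0 ≤ a → μ * a ^ 2 ≤ E1 →
      (μ = 0 → ν * a ≤ Q + d + ε * b) → Q ^ 2 ≤ L * E2 → 0 ≤ E1 → 0 ≤ E2 → E1 + E2 ≤ S →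
      a ^ 2 ≤ K * (S + d ^ 2 + ε ^ 2 * b ^ 2) := by
  rcases hμ.eq_or_lt with h0 | h0
  · have hν0 : 0 < ν := by
      refine lt_of_le_of_ne hν fun hh => ?_
      rw [← h0, ← hh] at h; simp at h
    refine ⟨3 * (L + 1) / ν ^ 2, by positivity, ?_⟩
    intro a Q E1 E2 S d b ε ha _ h2 h3 h4 h5 h6
    have h7 : (ν * a) ^ 2 ≤ (Q + d + ε * b) ^ 2 := by
      have := h2 h0.symm; gcongr
    have h8 : (Q + d + ε * b) ^ 2 ≤ 3 * (Q ^ 2 + d ^ 2 + (ε * b) ^ 2) := by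
      nlinarith [sq_nonneg (Q - d), sq_nonneg (Q - ε * b), sq_nonneg (d - ε * b)]
    have h9 : Q ^ 2 ≤ L * S := h3.trans (by gcongr; linarith)
    rw [div_mul_eq_mul_div, le_div_iff₀ (by positivity)]
    have h10 : 0 ≤ L * (d ^ 2 + (ε * b) ^ 2) := by positivity
    nlinarith
  · refine ⟨1 / μ, by positivity, ?_⟩
    intro a Q E1 E2 S d b ε ha h1 h2 h3 h4 h5 h6
    rw [div_mul_eq_mul_div, le_div_iff₀ h0]
    have : 0 ≤ d ^ 2 + ε ^ 2 * b ^ 2 := by positivity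
    linarith

set_option maxHeartbeats 2000000 in
lemma aux_exists {E F : Type*} [NormedAddCommGroup E] [InnerProductSpace ℝ E]
    [FiniteDimensional ℝ E] [NormedAddCommGroup F] [InnerProductSpace ℝ F] [FiniteDimensional ℝ F]
    (f' : E → E) (g' : F → F) (A : E →ₗ[ℝ] F) (A' : F →ₗ[ℝ] E)
    (hadj : ∀ x y, ⟪A' y, x⟫ = ⟪y, A x⟫)
    (μx Lx μy Ly μxy μyx : ℝ)
    (hμx : 0 ≤ μx) (hLx : 0 < Lx) (hμy : 0 ≤ μy) (hLy : 0 < Ly)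
    (hμxy : 0 ≤ μxy) (hμyx : 0 ≤ μyx)
    (hf : ∀ x y, ‖f' x - f' y‖ ^ 2 ≤ Lx * ⟪f' x - f' y, x - y⟫ ∧
      μx * ‖x - y‖ ^ 2 ≤ ⟪f' x - f' y, x - y⟫)
    (hg : ∀ x y, ‖g' x - g' y‖ ^ 2 ≤ Ly * ⟪g' x - g' y, x - y⟫ ∧
      μy * ‖x - y‖ ^ 2 ≤ ⟪g' x - g' y, x - y⟫)
    (hA : ∀ ε : ℝ, 0 < ε → ∀ x y, f' x + A' y + ε • x = 0 → μxy * ‖x‖ ≤ ‖A x‖)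
    (hA' : ∀ ε : ℝ, 0 < ε → ∀ x y, g' y - A x + ε • y = 0 → μyx * ‖y‖ ≤ ‖A' y‖)
    (hδx : 0 < μx + μxy ^ 2 / Ly) (hδy : 0 < μy + μyx ^ 2 / Lx) :
    ∃ x y, f' x + A' y = 0 ∧ g' y - A x = 0 := by
  obtain ⟨K1, hK1, hside1⟩ := aux_side μx μxy Ly hμx hμxy hLy hδx
  obtain ⟨K2, hK2, hside2⟩ := aux_side μy μyx Lx hμy hμyx hLx hδy
  have hfl : ∀ x y, ‖f' x - f' y‖ ≤ Lx * ‖x - y‖ := by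
    intro x y
    have h1 := (hf x y).1
    have h2 := real_inner_le_norm (f' x - f' y) (x - y)
    by_contra! hc
    have h3 : 0 < ‖f' x - f' y‖ := lt_of_le_of_lt (by positivity) hc
    nlinarith
  have hgl : ∀ x y, ‖g' x - g' y‖ ≤ Ly * ‖x - y‖ := by
    intro x y
    have h1 := (hg x y).1
    have h2 := real_inner_le_norm (g' x - g' y) (x - y)
    by_contra! hc
    have h3 : 0 < ‖g' x - g' y‖ := lt_of_le_of_lt (by positivity) hc
    nlinarith
  let G : WithLp 2 (E × F) → WithLp 2 (E × F) := fun z =>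
    WithLp.toLp 2 (f' z.fst + A' z.snd, g' z.snd - A z.fst)
  set C1 := ‖LinearMap.toContinuousLinearMap A‖
  set C2 := ‖LinearMap.toContinuousLinearMap A'‖
  have hC1 : ∀ x, ‖A x‖ ≤ C1 * ‖x‖ := (LinearMap.toContinuousLinearMap A).le_opNorm
  have hC2 : ∀ x, ‖A' x‖ ≤ C2 * ‖x‖ := (LinearMap.toContinuousLinearMap A').le_opNorm
  have hC10 : 0 ≤ C1 := norm_nonneg _
  have hC20 : 0 ≤ C2 := norm_nonneg _
  have hn1 : ∀ z : WithLp 2 (E × F), ‖z.fst‖ ≤ ‖z‖ := fun z => by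
    refine le_of_sq_le_sq ?_ (norm_nonneg _)
    rw [WithLp.prod_norm_sq_eq_of_L2]; nlinarith [sq_nonneg ‖z.snd‖]
  have hn2 : ∀ z : WithLp 2 (E × F), ‖z.snd‖ ≤ ‖z‖ := fun z => by
    refine le_of_sq_le_sq ?_ (norm_nonneg _)
    rw [WithLp.prod_norm_sq_eq_of_L2]; nlinarith [sq_nonneg ‖z.fst‖]
  have hn3 : ∀ z : WithLp 2 (E × F), ‖z‖ ≤ ‖z.fst‖ + ‖z.snd‖ := fun z => by
    refine le_of_sq_le_sq ?_ (by positivity)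
    rw [WithLp.prod_norm_sq_eq_of_L2]
    nlinarith [norm_nonneg z.fst, norm_nonneg z.snd, mul_nonneg (norm_nonneg z.fst) (norm_nonneg z.snd)]
  have hlip : ∀ z w, ‖G z - G w‖ ≤ (Lx + C2 + Ly + C1) * ‖z - w‖ := by
    intro z w
    refine (hn3 _).trans ?_
    have e1 : (G z - G w).fst = (f' z.fst - f' w.fst) + A' (z - w).snd := by
      simp [G]; abel
    have e2 : (G z - G w).snd = (g' z.snd - g' w.snd) - A (z - w).fst := by
      simp [G]; abel
    rw [e1, e2]
    have a1 := norm_add_le (f' z.fst - f' w.fst) (A' (z - w).snd)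
    have a2 := norm_sub_le (g' z.snd - g' w.snd) (A (z - w).fst)
    have a3 : ‖f' z.fst - f' w.fst‖ ≤ Lx * ‖z - w‖ :=
      (hfl _ _).trans (mul_le_mul_of_nonneg_left (hn1 (z - w)) hLx.le)
    have a4 : ‖g' z.snd - g' w.snd‖ ≤ Ly * ‖z - w‖ :=
      (hgl _ _).trans (mul_le_mul_of_nonneg_left (hn2 (z - w)) hLy.le)
    have a5 : ‖A' (z - w).snd‖ ≤ C2 * ‖z - w‖ :=
      (hC2 _).trans (mul_le_mul_of_nonneg_left (hn2 (z - w)) hC20)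
    have a6 : ‖A (z - w).fst‖ ≤ C1 * ‖z - w‖ :=
      (hC1 _).trans (mul_le_mul_of_nonneg_left (hn1 (z - w)) hC10)
    linarith
  have hf0 : ∀ x y, 0 ≤ ⟪f' x - f' y, x - y⟫ := fun x y =>
    le_trans (by positivity) (hf x y).2
  have hg0 : ∀ x y, 0 ≤ ⟪g' x - g' y, x - y⟫ := fun x y =>
    le_trans (by positivity) (hg x y).2
  have hinn : ∀ z w, ⟪G z - G w, z - w⟫ = ⟪f' z.fst - f' w.fst, z.fst - w.fst⟫ +
      ⟪g' z.snd - g' w.snd, z.snd - w.snd⟫ := by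
    intro z w
    have e1 : (G z - G w).fst = (f' z.fst - f' w.fst) + A' (z.snd - w.snd) := by
      simp [G]; abel
    have e2 : (G z - G w).snd = (g' z.snd - g' w.snd) - A (z.fst - w.fst) := by
      simp [G]; abel
    have : ⟪G z - G w, z - w⟫ = ⟪(G z - G w).fst, z.fst - w.fst⟫ +
      ⟪(G z - G w).snd, z.snd - w.snd⟫ := WithLp.prod_inner_apply _ _
    rw [this, e1, e2, inner_add_left, inner_sub_left (g' z.snd - g' w.snd), hadj,
      real_inner_comm (z.snd - w.snd) (A (z.fst - w.fst))]
    ring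
  have hmon : ∀ z w, 0 ≤ ⟪G z - G w, z - w⟫ := by
    intro z w
    rw [hinn]
    exact add_nonneg (hf0 _ _) (hg0 _ _)
  set K := K1 + K2 with hK
  set c := ‖f' 0‖
  set d := ‖g' 0‖
  have hK0 : 0 ≤ K := by positivity
  obtain ⟨z, hz⟩ := aux_zero G (Lx + C2 + Ly + C1) (by positivity) hlip hmon (1 / (2 * K + 1))
    (√((16 * K ^ 2 + 4 * K) * (c ^ 2 + d ^ 2))) (by positivity) (by
      intro ε hε hεle z hz
      refine Real.le_sqrt_of_sq_le ?_
      rw [WithLp.prod_norm_sq_eq_of_L2]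
      obtain ⟨x, y⟩ := z
      have q1 : f' x + A' y + ε • x = 0 := congrArg WithLp.fst hz
      have q2 : g' y - A x + ε • y = 0 := congrArg WithLp.snd hz
      show ‖x‖ ^ 2 + ‖y‖ ^ 2 ≤ _
      set E1 := ⟪f' x - f' 0, x⟫ with hE1
      set E2 := ⟪g' y - g' 0, y⟫ with hE2
      have f1 := hf x 0
      have g1 := hg y 0
      have f0 := hf0 x 0
      have g0 := hg0 y 0
      rw [sub_zero, ← hE1] at f1 f0
      rw [sub_zero, ← hE2] at g1 g0
      set a := ‖x‖
      set b := ‖y‖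
      have ha : 0 ≤ a := norm_nonneg _
      have hb : 0 ≤ b := norm_nonneg _
      have hS : E1 + E2 ≤ c * a + d * b := by
        have r1 : ⟪f' x + A' y + ε • x, x⟫ = 0 := by rw [q1, inner_zero_left]
        have r2 : ⟪g' y - A x + ε • y, y⟫ = 0 := by rw [q2, inner_zero_left]
        rw [inner_add_left, inner_add_left, hadj, inner_smul_left, real_inner_self_eq_norm_sq] at r1
        rw [inner_add_left, inner_sub_left, inner_smul_left, real_inner_self_eq_norm_sq,
          real_inner_comm y (A x)] at r2
        simp only [conj_trivial] at r1 r2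
        have s1 := neg_le_of_abs_le (abs_real_inner_le_norm (f' 0) x)
        have s2 := neg_le_of_abs_le (abs_real_inner_le_norm (g' 0) y)
        rw [hE1, hE2, inner_sub_left, inner_sub_left]
        have t1 : 0 ≤ ε * ‖x‖ ^ 2 := by positivity
        have t2 : 0 ≤ ε * ‖y‖ ^ 2 := by positivity
        linarith
      have B1 := hside1 a ‖g' y - g' 0‖ E1 E2 (c * a + d * b) d b ε ha f1.2 (by
        intro _
        refine (hA ε hε x y q1).trans ?_
        have : A x = (g' y - g' 0) + g' 0 + ε • y := by
          rw [sub_add_cancel]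
          have : g' y + ε • y - A x = 0 := by rw [← q2]; abel
          exact (sub_eq_zero.mp this).symm
        rw [this]
        refine (norm_add₃_le).trans ?_
        rw [norm_smul, Real.norm_eq_abs, abs_of_pos hε]) g1.1 f0 g0 hS
      have B2 := hside2 b ‖f' x - f' 0‖ E2 E1 (c * a + d * b) c a ε hb g1.2 (by
        intro _
        refine (hA' ε hε x y q2).trans ?_
        have : A' y = -((f' x - f' 0) + f' 0 + ε • x) := by
          rw [sub_add_cancel]
          refine eq_neg_of_add_eq_zero_left ?_
          rw [← q1]; abel
        rw [this, norm_neg]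
        refine (norm_add₃_le).trans ?_
        rw [norm_smul, Real.norm_eq_abs, abs_of_pos hε]) f1.1 g0 f0 (by linarith)
      have hS0 : 0 ≤ c * a + d * b := by positivity
      have hKε : K * ε ^ 2 ≤ 1 / 2 := by
        have : ε ^ 2 ≤ (1 / (2 * K + 1)) ^ 2 := by gcongr
        calc K * ε ^ 2 ≤ K * (1 / (2 * K + 1)) ^ 2 := by gcongr
          _ ≤ 1 / 2 := by
            rw [one_div_pow, mul_one_div, div_le_div_iff₀ (by positivity) (by norm_num)]
            nlinarith
      have B1' : a ^ 2 ≤ K * (c * a + d * b + d ^ 2 + ε ^ 2 * b ^ 2) :=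
        B1.trans (mul_le_mul_of_nonneg_right (by linarith) (by positivity))
      have B2' : b ^ 2 ≤ K * (c * a + d * b + c ^ 2 + ε ^ 2 * a ^ 2) :=
        B2.trans (mul_le_mul_of_nonneg_right (by linarith) (by positivity))
      have B3 : K * ε ^ 2 * (a ^ 2 + b ^ 2) ≤ 1 / 2 * (a ^ 2 + b ^ 2) := by gcongr
      nlinarith [sq_nonneg (a - 4 * K * c), sq_nonneg (b - 4 * K * d)])
  exact ⟨z.fst, z.snd, congrArg WithLp.fst hz, congrArg WithLp.snd hz⟩

end helpers

/-- Structure of the solution set of the bilinearly-coupled saddle-point problem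
`min_x max_y f(x) + ⟨y, Bx⟩ - g(y)` under smoothness/strong convexity and the
spectral assumption on `B`, assuming `δx, δy > 0`. -/
theorem solution_set_structure (dx dy : ℕ)
    (f : EuclideanSpace ℝ (Fin dx) → ℝ)
    (f' : EuclideanSpace ℝ (Fin dx) → EuclideanSpace ℝ (Fin dx))
    (g : EuclideanSpace ℝ (Fin dy) → ℝ)
    (g' : EuclideanSpace ℝ (Fin dy) → EuclideanSpace ℝ (Fin dy))
    (B : Matrix (Fin dy) (Fin dx) ℝ)
    (μx Lx μy Ly μxy μyx Lxy : ℝ)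
    (hμx : 0 ≤ μx) (hLx : μx < Lx)
    (hμy : 0 ≤ μy) (hLy : μy < Ly)
    (hμxy : 0 ≤ μxy) (hμyx : 0 ≤ μyx) (hLxy : μxy < Lxy) (hLxy' : μyx < Lxy)
    -- f is differentiable with gradient f', μx-strongly convex and Lx-smooth
    (hfd : ∀ x, HasGradientAt f (f' x) x)
    (hfsc : ∀ x x', μx / 2 * ‖x - x'‖ ^ 2 ≤ f x - f x' - ⟪f' x', x - x'⟫)
    (hfsm : ∀ x x', |f x - f x' - ⟪f' x', x - x'⟫| ≤ Lx / 2 * ‖x - x'‖ ^ 2)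
    -- g is differentiable with gradient g', μy-strongly convex and Ly-smooth
    (hgd : ∀ y, HasGradientAt g (g' y) y)
    (hgsc : ∀ y y', μy / 2 * ‖y - y'‖ ^ 2 ≤ g y - g y' - ⟪g' y', y - y'⟫)
    (hgsm : ∀ y y', |g y - g y' - ⟪g' y', y - y'⟫| ≤ Ly / 2 * ‖y - y'‖ ^ 2)
    -- spectral assumption on B
    (hBub : ∀ x, ‖Matrix.toEuclideanLin B x‖ ≤ Lxy * ‖x‖)
    (hBlbx : ((∀ x, f' x ∈ LinearMap.range (Matrix.toEuclideanLin Bᵀ)) ∧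
        ∀ x ∈ (LinearMap.ker (Matrix.toEuclideanLin B))ᗮ,
          μxy * ‖x‖ ≤ ‖Matrix.toEuclideanLin B x‖) ∨
      ((¬ ∀ x, f' x ∈ LinearMap.range (Matrix.toEuclideanLin Bᵀ)) ∧
        ∀ x, μxy * ‖x‖ ≤ ‖Matrix.toEuclideanLin B x‖))
    (hBlby : ((∀ y, g' y ∈ LinearMap.range (Matrix.toEuclideanLin B)) ∧
        ∀ y ∈ (LinearMap.ker (Matrix.toEuclideanLin Bᵀ))ᗮ,
          μyx * ‖y‖ ≤ ‖Matrix.toEuclideanLin Bᵀ y‖) ∨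
      ((¬ ∀ y, g' y ∈ LinearMap.range (Matrix.toEuclideanLin B)) ∧
        ∀ y, μyx * ‖y‖ ≤ ‖Matrix.toEuclideanLin Bᵀ y‖))
    (hcons : 0 < μxy → 0 < μyx → μxy = μyx)
    -- δx > 0 and δy > 0
    (hδx : 0 < μx + μxy ^ 2 / Ly) (hδy : 0 < μy + μyx ^ 2 / Lx)
    -- the translation subspaces
    (Vx : Set (EuclideanSpace ℝ (Fin dx)))
    (hVxpos : 0 < μx → Vx = {0})
    (hVxzero : μx = 0 → Vx = (LinearMap.ker (Matrix.toEuclideanLin B) : Set _))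
    (Vy : Set (EuclideanSpace ℝ (Fin dy)))
    (hVypos : 0 < μy → Vy = {0})
    (hVyzero : μy = 0 → Vy = (LinearMap.ker (Matrix.toEuclideanLin Bᵀ) : Set _)) :
    {p : EuclideanSpace ℝ (Fin dx) × EuclideanSpace ℝ (Fin dy) |
        f' p.1 + Matrix.toEuclideanLin Bᵀ p.2 = 0 ∧
        g' p.2 - Matrix.toEuclideanLin B p.1 = 0}.Nonempty ∧
    ∀ p ∈ {p : EuclideanSpace ℝ (Fin dx) × EuclideanSpace ℝ (Fin dy) |
        f' p.1 + Matrix.toEuclideanLin Bᵀ p.2 = 0 ∧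
        g' p.2 - Matrix.toEuclideanLin B p.1 = 0},
      {q : EuclideanSpace ℝ (Fin dx) × EuclideanSpace ℝ (Fin dy) |
        f' q.1 + Matrix.toEuclideanLin Bᵀ q.2 = 0 ∧
        g' q.2 - Matrix.toEuclideanLin B q.1 = 0} =
      ((p.1 + ·) '' Vx) ×ˢ ((p.2 + ·) '' Vy) := by
  have hLx0 : 0 < Lx := lt_of_le_of_lt hμx hLx
  have hLy0 : 0 < Ly := lt_of_le_of_lt hμy hLy
  have hf := aux_coco f f' μx Lx hμx hLx hfsc hfsm
  have hg := aux_coco g g' μy Ly hμy hLy hgsc hgsm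
  have hadj : ∀ x y, ⟪Matrix.toEuclideanLin Bᵀ y, x⟫ = ⟪y, Matrix.toEuclideanLin B x⟫ := by
    intro x y
    have h := Matrix.toEuclideanLin_conjTranspose_eq_adjoint B
    rw [Matrix.conjTranspose_eq_transpose_of_trivial] at h
    rw [h, LinearMap.adjoint_inner_left]
  generalize Matrix.toEuclideanLin B = A at *
  generalize Matrix.toEuclideanLin Bᵀ = A' at *
  have hrx : ∀ w ∈ LinearMap.range A', ∀ v, A v = 0 → ⟪w, v⟫ = 0 := by
    rintro _ ⟨y, rfl⟩ v hv
    rw [hadj, hv, inner_zero_right]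
  have hry : ∀ w ∈ LinearMap.range A, ∀ v, A' v = 0 → ⟪w, v⟫ = 0 := by
    rintro _ ⟨y, rfl⟩ v hv
    rw [real_inner_comm, ← hadj, hv, inner_zero_left]
  have hμxy0 : μx = 0 → 0 < μxy := fun h0 => by
    refine lt_of_le_of_ne hμxy fun hh => ?_
    rw [h0, ← hh] at hδx; simp at hδx
  have hμyx0 : μy = 0 → 0 < μyx := fun h0 => by
    refine lt_of_le_of_ne hμyx fun hh => ?_
    rw [h0, ← hh] at hδy; simp at hδy
  -- invariance of the gradients
  have hinvx : ∀ x, ∀ v ∈ Vx, f' (x + v) = f' x ∧ A v = 0 := by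
    intro x v hv
    rcases hμx.eq_or_lt with h0 | h0
    · rw [hVxzero h0.symm] at hv
      have hv : A v = 0 := hv
      refine ⟨?_, hv⟩
      rcases hBlbx with ⟨h1, _⟩ | ⟨_, h1⟩
      · have h2 := (hf (x + v) x).1
        rw [add_sub_cancel_left, inner_sub_left, hrx _ (h1 _) v hv, hrx _ (h1 _) v hv] at h2
        have h3 : ‖f' (x + v) - f' x‖ = 0 := by
          have := norm_nonneg (f' (x + v) - f' x)
          nlinarith
        exact sub_eq_zero.mp (norm_eq_zero.mp h3)
      · have h2 := h1 v
        rw [hv, norm_zero] at h2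
        have h3 : ‖v‖ = 0 := by
          have := norm_nonneg v
          have := hμxy0 h0.symm
          nlinarith
        rw [norm_eq_zero.mp h3, add_zero]
    · rw [hVxpos h0, Set.mem_singleton_iff] at hv
      simp [hv]
  have hinvy : ∀ x, ∀ v ∈ Vy, g' (x + v) = g' x ∧ A' v = 0 := by
    intro x v hv
    rcases hμy.eq_or_lt with h0 | h0
    · rw [hVyzero h0.symm] at hv
      have hv : A' v = 0 := hv
      refine ⟨?_, hv⟩
      rcases hBlby with ⟨h1, _⟩ | ⟨_, h1⟩
      · have h2 := (hg (x + v) x).1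
        rw [add_sub_cancel_left, inner_sub_left, hry _ (h1 _) v hv, hry _ (h1 _) v hv] at h2
        have h3 : ‖g' (x + v) - g' x‖ = 0 := by
          have := norm_nonneg (g' (x + v) - g' x)
          nlinarith
        exact sub_eq_zero.mp (norm_eq_zero.mp h3)
      · have h2 := h1 v
        rw [hv, norm_zero] at h2
        have h3 : ‖v‖ = 0 := by
          have := norm_nonneg v
          have := hμyx0 h0.symm
          nlinarith
        rw [norm_eq_zero.mp h3, add_zero]
    · rw [hVypos h0, Set.mem_singleton_iff] at hv
      simp [hv]
  constructor
  · obtain ⟨x, y, h1, h2⟩ := aux_exists f' g' A A' hadj μx Lx μy Ly μxy μyx hμx hLx0 hμy hLy0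
      hμxy hμyx hf hg (by
        intro ε hε x y h
        rcases hBlbx with ⟨h1, h2⟩ | ⟨_, h1⟩
        · refine h2 x ?_
          rw [Submodule.mem_orthogonal']
          intro v hv
          have h3 : ⟪f' x + A' y + ε • x, v⟫ = 0 := by rw [h, inner_zero_left]
          rw [inner_add_left, inner_add_left, hrx _ (h1 x) v hv, hrx _ ⟨y, rfl⟩ v hv,
            inner_smul_left] at h3
          simpa [hε.ne'] using h3
        · exact h1 x) (by
        intro ε hε x y h
        rcases hBlby with ⟨h1, h2⟩ | ⟨_, h1⟩
        · refine h2 y ?_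
          rw [Submodule.mem_orthogonal']
          intro v hv
          have h3 : ⟪g' y - A x + ε • y, v⟫ = 0 := by rw [h, inner_zero_left]
          rw [inner_add_left, inner_sub_left, hry _ (h1 y) v hv, hry _ ⟨x, rfl⟩ v hv,
            inner_smul_left] at h3
          simpa [hε.ne'] using h3
        · exact h1 y) hδx hδy
    exact ⟨(x, y), h1, h2⟩
  · rintro ⟨x, y⟩ ⟨h1, h2⟩
    ext ⟨u, w⟩
    simp only [Set.mem_setOf_eq, Set.mem_prod, Set.mem_image] at h1 h2 ⊢
    constructor
    · rintro ⟨h3, h4⟩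
      have e1 : f' u - f' x = - A' (w - y) := by
        rw [eq_neg_of_add_eq_zero_left h1, eq_neg_of_add_eq_zero_left h3, map_sub]; abel
      have e2 : g' w - g' y = A (u - x) := by
        rw [sub_eq_zero.mp h2, sub_eq_zero.mp h4, map_sub]
      have hsum : ⟪f' u - f' x, u - x⟫ + ⟪g' w - g' y, w - y⟫ = 0 := by
        rw [e1, e2, inner_neg_left, hadj, real_inner_comm (w - y)]; ring
      have p1 : 0 ≤ ⟪f' u - f' x, u - x⟫ := le_trans (by positivity) (hf u x).2
      have p2 : 0 ≤ ⟪g' w - g' y, w - y⟫ := le_trans (by positivity) (hg w y).2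
      have z1 : ⟪f' u - f' x, u - x⟫ = 0 := by linarith
      have z2 : ⟪g' w - g' y, w - y⟫ = 0 := by linarith
      have k1 := hf u x
      have k2 := hg w y
      rw [z1, mul_zero] at k1
      rw [z2, mul_zero] at k2
      have n1 : f' u - f' x = 0 := by
        have := pow_eq_zero_iff (two_ne_zero) |>.mp (le_antisymm k1.1 (by positivity))
        exact norm_eq_zero.mp this
      have n2 : g' w - g' y = 0 := by
        have := pow_eq_zero_iff (two_ne_zero) |>.mp (le_antisymm k2.1 (by positivity))
        exact norm_eq_zero.mp this
      rw [n1] at e1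
      rw [n2] at e2
      refine ⟨⟨u - x, ?_, by simp⟩, ⟨w - y, ?_, by simp⟩⟩
      · rcases hμx.eq_or_lt with h0 | h0
        · rw [hVxzero h0.symm]; exact e2.symm
        · rw [hVxpos h0]
          have h5 : ‖u - x‖ ^ 2 = 0 := by
            have := sq_nonneg ‖u - x‖
            have := k1.2
            nlinarith
          simpa using h5
      · rcases hμy.eq_or_lt with h0 | h0
        · rw [hVyzero h0.symm]; exact neg_eq_zero.mp e1.symm
        · rw [hVypos h0]
          have h5 : ‖w - y‖ ^ 2 = 0 := by
            have := sq_nonneg ‖w - y‖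
            have := k2.2
            nlinarith
          simpa using h5
    · rintro ⟨⟨v, hv, rfl⟩, ⟨v', hv', rfl⟩⟩
      rw [(hinvx x v hv).1, (hinvy y v' hv').1, map_add, map_add, (hinvx x v hv).2,
        (hinvy y v' hv').2, add_zero, add_zero]
      exact ⟨h1, h2⟩
end

section
/- Let n ≥ 2 be an integer and α, β, γ > 0. Define the matrix E ∈ ℝ^{3n×3n} (1-indexed) by: E(1,j) = γ for 1 ≤ j ≤ n; E(1+i, i) = β and E(1+i, n+1) = −β for 1 ≤ i ≤ n; E(n+1+i, n+i) = α and E(n+1+i, n+i+1) = −α for 1 ≤ i ≤ n−1; E(2n+i, 2n) = −β and E(2n+i, 2n+i) = β for 1 ≤ i ≤ n; and all other entries equal to 0. Then min{nγ²/4, β²/36, α²/(9n²)}·I_{3n} ⪯ E·Eᵀ ⪯ max{2nγ², 2(n+1)β², 4α²}·I_{3n}. Moreover, the matrix E' ∈ ℝ^{(3n−1)×3n} obtained from E by deleting its first row satisfies min{β²/36, α²/(9n²)}·I_{3n−1} ⪯ E'·E'ᵀ ⪯ max{2(n+1)β², 4α²}·I_{3n−1}. -/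
open scoped RealInnerProductSpace Matrix

/-- Entry formula of `E` on natural-number indices. -/
noncomputable def entE (n : ℕ) (α β γ : ℝ) (i j : ℕ) : ℝ :=
  if i = 0 then (if j < n then γ else 0)
      else if i ≤ n then (if j + 1 = i then β else if j = n then -β else 0)
      else if i ≤ 2 * n - 1 then
        (if j + 1 = i then α else if j = i then -α else 0)
      else (if j = 2 * n - 1 then -β else if j = i then β else 0)

/-- The sequence whose increments are the middle entries of `Eᵀ x`. -/
noncomputable def pseq (k : ℕ) (α β : ℝ) (x : ℕ → ℝ) (i : ℕ) : ℝ :=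
  if i = 0 then β * ∑ l ∈ Finset.range (k + 1), x (1 + l)
  else if i ≤ k then α * x (k + 1 + i)
  else - (β * ∑ l ∈ Finset.range (k + 1), x (2 * k + 2 + l))

lemma split_sum (k : ℕ) (f : ℕ → ℝ) :
    ∑ i ∈ Finset.range (3 * (k + 1)), f i = f 0 + ∑ i ∈ Finset.range (k + 1), f (1 + i)
      + ∑ i ∈ Finset.range k, f (k + 2 + i) + ∑ i ∈ Finset.range (k + 1), f (2 * k + 2 + i) := by
  have h : 3 * (k + 1) = ((1 + (k + 1)) + k) + (k + 1) := by ring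
  rw [h, Finset.sum_range_add, Finset.sum_range_add, Finset.sum_range_add]
  simp only [Finset.sum_range_one]
  congr 1
  · congr 1
    exact Finset.sum_congr rfl fun i _ => by congr 1; ring
  · exact Finset.sum_congr rfl fun i _ => by congr 1; ring

lemma single_sum (s : ℕ) (f g : ℕ → ℝ) (c : ℕ) (hc : c < s) (h : ∀ i < s, f i = if i = c then g i else 0) :
    ∑ i ∈ Finset.range s, f i = g c := by
  rw [Finset.sum_congr rfl (fun i hi => h i (Finset.mem_range.1 hi))]
  simp [hc]

lemma zero_sum (s : ℕ) (f : ℕ → ℝ) (h : ∀ i < s, f i = 0) :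
    ∑ i ∈ Finset.range s, f i = 0 :=
  Finset.sum_eq_zero fun i hi => h i (Finset.mem_range.1 hi)

lemma cmul_sum (s : ℕ) (f g : ℕ → ℝ) (c : ℝ) (h : ∀ i < s, f i = c * g i) :
    ∑ i ∈ Finset.range s, f i = c * ∑ i ∈ Finset.range s, g i := by
  rw [Finset.mul_sum]
  exact Finset.sum_congr rfl fun i hi => h i (Finset.mem_range.1 hi)

lemma y_one (k : ℕ) (hk : 1 ≤ k) (α β γ : ℝ) (x : ℕ → ℝ) (j : ℕ) (hj : j < k + 1) :
    ∑ i ∈ Finset.range (3 * (k + 1)), entE (k + 1) α β γ i j * x i = γ * x 0 + β * x (1 + j) := by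
  rw [split_sum, single_sum (k + 1) _ (fun i => β * x (1 + i)) j hj, zero_sum k, zero_sum (k + 1)]
  · simp [entE, hj]
  · intro i hi; unfold entE; grind
  · intro i hi; unfold entE; grind
  · intro i hi; unfold entE; grind

lemma y_two (k : ℕ) (hk : 1 ≤ k) (α β γ : ℝ) (x : ℕ → ℝ) (c : ℕ) (hc : c ≤ k) :
    ∑ i ∈ Finset.range (3 * (k + 1)), entE (k + 1) α β γ i (k + 1 + c) * x i
      = pseq k α β x (c + 1) - pseq k α β x c := by
  rw [split_sum]
  have h0 : entE (k + 1) α β γ 0 (k + 1 + c) = 0 := by unfold entE; grind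
  rw [h0]
  have h1 : ∑ i ∈ Finset.range (k + 1), entE (k + 1) α β γ (1 + i) (k + 1 + c) * x (1 + i)
      = if c = 0 then - (β * ∑ l ∈ Finset.range (k + 1), x (1 + l)) else 0 := by
    split_ifs with h
    · rw [cmul_sum (k + 1) _ (fun i => x (1 + i)) (-β)]
      · ring
      · intro i hi; unfold entE; grind
    · apply zero_sum; intro i hi; unfold entE; grind
  have h3 : ∑ i ∈ Finset.range (k + 1), entE (k + 1) α β γ (2 * k + 2 + i) (k + 1 + c) * x (2 * k + 2 + i)
      = if c = k then - (β * ∑ l ∈ Finset.range (k + 1), x (2 * k + 2 + l)) else 0 := by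
    split_ifs with h
    · rw [cmul_sum (k + 1) _ (fun i => x (2 * k + 2 + i)) (-β)]
      · ring
      · intro i hi; unfold entE; grind
    · apply zero_sum; intro i hi; unfold entE; grind
  have h2 : ∑ i ∈ Finset.range k, entE (k + 1) α β γ (k + 2 + i) (k + 1 + c) * x (k + 2 + i)
      = (if c < k then α * x (k + 2 + c) else 0) - (if c = 0 then 0 else α * x (k + 1 + c)) := by
    have e : ∀ i ∈ Finset.range k, entE (k + 1) α β γ (k + 2 + i) (k + 1 + c) * x (k + 2 + i)
        = (if i = c then α * x (k + 2 + i) else 0) - (if i + 1 = c then α * x (k + 2 + i) else 0) := by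
      intro i hi
      have := Finset.mem_range.1 hi
      unfold entE; grind
    rw [Finset.sum_congr rfl e, Finset.sum_sub_distrib]
    congr 1
    · simp
    · split_ifs with h
      · apply zero_sum; intro i hi; grind
      · rw [single_sum k _ (fun i => α * x (k + 2 + i)) (c - 1) (by omega)]
        · congr 2; omega
        · intro i hi; grind
  rw [h1, h2, h3]
  unfold pseq
  have e2 : k + 1 + (c + 1) = k + 2 + c := by ring
  rw [e2]
  have e3 : c + 1 ≠ 0 := by omega
  rw [if_neg e3]
  by_cases a : c = 0
  · subst a
    rw [if_pos rfl, if_pos (by omega), if_pos rfl, if_neg (by omega), if_pos (by omega), if_pos rfl]; ring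
  · by_cases b : c = k
    · simp [b, show k ≠ 0 by omega]; ring
    · simp [a, b, hc, show c < k by omega, show c + 1 ≤ k by omega]

lemma y_three (k : ℕ) (hk : 1 ≤ k) (α β γ : ℝ) (x : ℕ → ℝ) (c : ℕ) (hc : c < k + 1) :
    ∑ i ∈ Finset.range (3 * (k + 1)), entE (k + 1) α β γ i (2 * k + 2 + c) * x i
      = β * x (2 * k + 2 + c) := by
  rw [split_sum, single_sum (k + 1) (fun i => entE (k + 1) α β γ (2 * k + 2 + i) (2 * k + 2 + c) * x (2 * k + 2 + i)) (fun i => β * x (2 * k + 2 + i)) c hc, zero_sum k, zero_sum (k + 1)]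
  · have h0 : entE (k + 1) α β γ 0 (2 * k + 2 + c) = 0 := by unfold entE; grind
    rw [h0]; ring
  · intro i hi; unfold entE; grind
  · intro i hi; unfold entE; grind
  · intro i hi; unfold entE; grind

lemma split_cols (k : ℕ) (f : ℕ → ℝ) :
    ∑ i ∈ Finset.range (3 * (k + 1)), f i = ∑ i ∈ Finset.range (k + 1), f i
      + ∑ i ∈ Finset.range (k + 1), f (k + 1 + i) + ∑ i ∈ Finset.range (k + 1), f (2 * k + 2 + i) := by
  have h : 3 * (k + 1) = ((k + 1) + (k + 1)) + (k + 1) := by ring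
  rw [h, Finset.sum_range_add, Finset.sum_range_add]
  congr 1
  exact Finset.sum_congr rfl fun i _ => by congr 1; ring

lemma cs (s : ℕ) (f : ℕ → ℝ) :
    (∑ i ∈ Finset.range s, f i) ^ 2 ≤ s * ∑ i ∈ Finset.range s, f i ^ 2 := by
  simpa using sq_sum_le_card_mul_sum_sq (s := Finset.range s) (f := f)

lemma lower (k : ℕ) (hk : 1 ≤ k) (α β γ m : ℝ) (x : ℕ → ℝ)
    (hmβ : m ≤ β ^ 2 / 36) (hmα : m ≤ α ^ 2 / (9 * ((k : ℝ) + 1) ^ 2))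
    (hmγ : m ≤ ((k : ℝ) + 1) * γ ^ 2 / 4 ∨ x 0 = 0) :
    m * ∑ i ∈ Finset.range (3 * (k + 1)), x i ^ 2 ≤
      ∑ j ∈ Finset.range (3 * (k + 1)),
        (∑ i ∈ Finset.range (3 * (k + 1)), entE (k + 1) α β γ i j * x i) ^ 2 := by
  set y : ℕ → ℝ := fun j => ∑ i ∈ Finset.range (3 * (k + 1)), entE (k + 1) α β γ i j * x i with hy
  change _ ≤ ∑ j ∈ Finset.range (3 * (k + 1)), y j ^ 2
  have h1 : ∀ j < k + 1, y j = γ * x 0 + β * x (1 + j) := fun j hj => y_one k hk α β γ x j hj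
  have h2 : ∀ c ≤ k, y (k + 1 + c) = pseq k α β x (c + 1) - pseq k α β x c :=
    fun j hj => y_two k hk α β γ x j hj
  have h3 : ∀ c < k + 1, y (2 * k + 2 + c) = β * x (2 * k + 2 + c) :=
    fun j hj => y_three k hk α β γ x j hj
  clear_value y
  clear hy
  set P := pseq k α β x with hP
  have hP0 : P 0 = β * ∑ l ∈ Finset.range (k + 1), x (1 + l) := by simp [hP, pseq]
  have hPk : P (k + 1) = - (β * ∑ l ∈ Finset.range (k + 1), x (2 * k + 2 + l)) := by
    simp [hP, pseq]
  have hPi : ∀ i < k, P (i + 1) = α * x (k + 2 + i) := by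
    intro i hi
    have : k + 1 + (i + 1) = k + 2 + i := by ring
    simp [hP, pseq, this, show i + 1 ≤ k by omega]
  clear_value P
  have pre1 : ∑ j ∈ Finset.range (k + 1), y j = ((k : ℝ) + 1) * (γ * x 0) + P 0 := by
    rw [Finset.sum_congr rfl (fun j hj => h1 j (Finset.mem_range.1 hj)), Finset.sum_add_distrib,
      hP0, Finset.mul_sum, Finset.sum_const, Finset.card_range, nsmul_eq_mul]
    push_cast
    ring
  have pre2 : ∀ i ≤ k + 1, ∑ j ∈ Finset.range (k + 1 + i), y j = ((k : ℝ) + 1) * (γ * x 0) + P i := by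
    intro i
    induction i with
    | zero => intro _; simpa using pre1
    | succ i ih =>
      intro hi
      rw [← add_assoc, Finset.sum_range_succ, ih (by omega), h2 i (by omega)]
      ring
  have tot : ∑ j ∈ Finset.range (3 * (k + 1)), y j = ((k : ℝ) + 1) * (γ * x 0) := by
    have e : 3 * (k + 1) = (k + 1 + (k + 1)) + (k + 1) := by ring
    rw [e, Finset.sum_range_add, pre2 (k + 1) le_rfl, hPk]
    have : ∑ i ∈ Finset.range (k + 1), y (k + 1 + (k + 1) + i)
        = β * ∑ l ∈ Finset.range (k + 1), x (2 * k + 2 + l) := by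
      apply cmul_sum
      intro i hi
      rw [← h3 i hi]; congr 1; ring
    rw [this]; ring
  set Q := ∑ j ∈ Finset.range (3 * (k + 1)), y j ^ 2 with hQ
  set Q1 := ∑ j ∈ Finset.range (k + 1), y j ^ 2 with hQ1
  have hQ1n : 0 ≤ Q1 := Finset.sum_nonneg fun _ _ => sq_nonneg _
  have tail : ∀ i ≤ k + 1, P i ^ 2 ≤ (2 * ((k : ℝ) + 1) - i) * (Q - Q1) := by
    intro i hi
    have e : ∑ j ∈ Finset.Ico (k + 1 + i) (3 * (k + 1)), y j = - P i := by
      rw [Finset.sum_Ico_eq_sub _ (by omega), tot, pre2 i hi]; ring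
    have c := sq_sum_le_card_mul_sum_sq (s := Finset.Ico (k + 1 + i) (3 * (k + 1))) (f := y)
    rw [e, Nat.card_Ico, Nat.cast_sub (by omega)] at c
    have d : ∑ j ∈ Finset.Ico (k + 1 + i) (3 * (k + 1)), y j ^ 2 ≤ Q - Q1 := by
      rw [hQ, hQ1, ← Finset.sum_Ico_eq_sub _ (by omega)]
      apply Finset.sum_le_sum_of_subset_of_nonneg
      · apply Finset.Ico_subset_Ico_left; omega
      · intros; positivity
    have hi' : (i : ℝ) ≤ k + 1 := by exact_mod_cast hi
    push_cast at c
    calc P i ^ 2 = (- P i) ^ 2 := by ring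
      _ ≤ _ := c
      _ = (2 * ((k : ℝ) + 1) - i) * ∑ j ∈ Finset.Ico (k + 1 + i) (3 * (k + 1)), y j ^ 2 := by ring
      _ ≤ _ := by
        apply mul_le_mul_of_nonneg_left d
        have : (0 : ℝ) ≤ k := Nat.cast_nonneg k
        linarith
  have hn : (0 : ℝ) < (k : ℝ) + 1 := by positivity
  -- bound on `x 0`
  have hT : ((k : ℝ) + 1) * γ ^ 2 * x 0 ^ 2 ≤ 3 * Q := by
    have c := cs (3 * (k + 1)) y
    rw [tot] at c
    push_cast at c
    have : ((k : ℝ) + 1) * (((k : ℝ) + 1) * γ ^ 2 * x 0 ^ 2) ≤ ((k : ℝ) + 1) * (3 * Q) := by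
      nlinarith [c]
    exact le_of_mul_le_mul_left this hn
  have hQsplit : Q = Q1 + ∑ i ∈ Finset.range (k + 1), y (k + 1 + i) ^ 2
      + ∑ i ∈ Finset.range (k + 1), y (2 * k + 2 + i) ^ 2 := split_cols k (fun j => y j ^ 2)
  have hQ2n : 0 ≤ ∑ i ∈ Finset.range (k + 1), y (k + 1 + i) ^ 2 :=
    Finset.sum_nonneg fun _ _ => sq_nonneg _
  have hQ3n : 0 ≤ ∑ i ∈ Finset.range (k + 1), y (2 * k + 2 + i) ^ 2 :=
    Finset.sum_nonneg fun _ _ => sq_nonneg _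
  have hW : β ^ 2 * ∑ i ∈ Finset.range (k + 1), x (2 * k + 2 + i) ^ 2 ≤ Q := by
    have : ∑ i ∈ Finset.range (k + 1), y (2 * k + 2 + i) ^ 2
        = β ^ 2 * ∑ i ∈ Finset.range (k + 1), x (2 * k + 2 + i) ^ 2 := by
      apply cmul_sum
      intro i hi
      rw [h3 i hi]; ring
    linarith
  have hU : β ^ 2 * ∑ i ∈ Finset.range (k + 1), x (1 + i) ^ 2 ≤ 2 * Q := by
    have e : β ^ 2 * ∑ i ∈ Finset.range (k + 1), x (1 + i) ^ 2
        = Q1 - 2 * (γ * x 0) * ∑ j ∈ Finset.range (k + 1), y j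
          + ((k : ℝ) + 1) * (γ * x 0) ^ 2 := by
      have : β ^ 2 * ∑ i ∈ Finset.range (k + 1), x (1 + i) ^ 2
          = ∑ i ∈ Finset.range (k + 1), (y i ^ 2 - 2 * (γ * x 0) * y i + (γ * x 0) ^ 2) := by
        rw [Finset.mul_sum]
        apply Finset.sum_congr rfl
        intro i hi
        rw [h1 i (Finset.mem_range.1 hi)]; ring
      rw [this, Finset.sum_add_distrib, Finset.sum_sub_distrib, ← Finset.mul_sum]
      simp [hQ1]
    rw [pre1] at e
    have t0 := tail 0 (by omega)
    have : ((k : ℝ) + 1) * (β ^ 2 * ∑ i ∈ Finset.range (k + 1), x (1 + i) ^ 2)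
        ≤ ((k : ℝ) + 1) * (2 * Q) := by
      rw [e]
      push_cast at t0
      nlinarith [sq_nonneg (((k : ℝ) + 1) * (γ * x 0) + P 0), mul_nonneg hn.le hQ1n]
    exact le_of_mul_le_mul_left this hn
  have hQn : 0 ≤ Q := by linarith
  have hPs : α ^ 2 * ∑ i ∈ Finset.range k, x (k + 2 + i) ^ 2 ≤ 3 / 2 * ((k : ℝ) + 1) ^ 2 * Q := by
    have g : ∀ s : ℕ, ∑ i ∈ Finset.range s, (2 * ((k : ℝ) + 1) - ((i : ℝ) + 1))
        = 2 * ((k : ℝ) + 1) * s - s * (s + 1) / 2 := by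
      intro s
      induction s with
      | zero => simp
      | succ s ih => rw [Finset.sum_range_succ, ih]; push_cast; ring
    have : α ^ 2 * ∑ i ∈ Finset.range k, x (k + 2 + i) ^ 2
        ≤ ∑ i ∈ Finset.range k, (2 * ((k : ℝ) + 1) - ((i : ℝ) + 1)) * Q := by
      rw [Finset.mul_sum]
      apply Finset.sum_le_sum
      intro i hi
      have hi := Finset.mem_range.1 hi
      have t := tail (i + 1) (by omega)
      rw [hPi i hi] at t
      push_cast at t
      have hi' : (i : ℝ) ≤ k := by exact_mod_cast hi.le
      have hk0 : (0 : ℝ) ≤ k := Nat.cast_nonneg k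
      have : 0 ≤ (2 * ((k : ℝ) + 1) - ((i : ℝ) + 1)) * Q1 := mul_nonneg (by linarith) hQ1n
      nlinarith
    rw [← Finset.sum_mul, g] at this
    refine this.trans (mul_le_mul_of_nonneg_right ?_ hQn)
    have hk0 : (0 : ℝ) ≤ k := Nat.cast_nonneg k
    nlinarith
  rw [split_sum]
  have sU : 0 ≤ ∑ i ∈ Finset.range (k + 1), x (1 + i) ^ 2 := Finset.sum_nonneg fun _ _ => sq_nonneg _
  have sW : 0 ≤ ∑ i ∈ Finset.range (k + 1), x (2 * k + 2 + i) ^ 2 :=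
    Finset.sum_nonneg fun _ _ => sq_nonneg _
  have sP : 0 ≤ ∑ i ∈ Finset.range k, x (k + 2 + i) ^ 2 := Finset.sum_nonneg fun _ _ => sq_nonneg _
  have a0 : m * x 0 ^ 2 ≤ 3 / 4 * Q := by
    rcases hmγ with h | h
    · have := mul_le_mul_of_nonneg_right h (sq_nonneg (x 0))
      linarith
    · rw [h]; simp; linarith
  have a1 := mul_le_mul_of_nonneg_right hmβ sU
  have a2 := mul_le_mul_of_nonneg_right hmβ sW
  have a3 : m * ∑ i ∈ Finset.range k, x (k + 2 + i) ^ 2 ≤ 1 / 6 * Q := by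
    refine (mul_le_mul_of_nonneg_right hmα sP).trans ?_
    rw [div_mul_eq_mul_div, div_le_iff₀ (by positivity)]
    linarith
  linarith

lemma upper (k : ℕ) (hk : 1 ≤ k) (α β γ m : ℝ) (x : ℕ → ℝ)
    (hmβ : 2 * ((k : ℝ) + 1 + 1) * β ^ 2 ≤ m) (hmα : 4 * α ^ 2 ≤ m)
    (hmγ : 2 * ((k : ℝ) + 1) * γ ^ 2 ≤ m ∨ x 0 = 0) :
      ∑ j ∈ Finset.range (3 * (k + 1)),
        (∑ i ∈ Finset.range (3 * (k + 1)), entE (k + 1) α β γ i j * x i) ^ 2 ≤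
    m * ∑ i ∈ Finset.range (3 * (k + 1)), x i ^ 2 := by
  rw [split_cols, split_sum]
  set P := pseq k α β x with hP
  have hP0 : P 0 = β * ∑ l ∈ Finset.range (k + 1), x (1 + l) := by simp [hP, pseq]
  have hPk : P (k + 1) = - (β * ∑ l ∈ Finset.range (k + 1), x (2 * k + 2 + l)) := by
    simp [hP, pseq]
  have hPi : ∀ i < k, P (i + 1) = α * x (k + 2 + i) := by
    intro i hi
    have : k + 1 + (i + 1) = k + 2 + i := by ring
    simp [hP, pseq, this, show i + 1 ≤ k by omega]
  have b1 : ∑ j ∈ Finset.range (k + 1),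
        (∑ i ∈ Finset.range (3 * (k + 1)), entE (k + 1) α β γ i j * x i) ^ 2
      ≤ 2 * ((k : ℝ) + 1) * γ ^ 2 * x 0 ^ 2
        + 2 * β ^ 2 * ∑ i ∈ Finset.range (k + 1), x (1 + i) ^ 2 := by
    have : ∑ j ∈ Finset.range (k + 1), (2 * γ ^ 2 * x 0 ^ 2 + 2 * β ^ 2 * x (1 + j) ^ 2)
      = 2 * ((k : ℝ) + 1) * γ ^ 2 * x 0 ^ 2
        + 2 * β ^ 2 * ∑ i ∈ Finset.range (k + 1), x (1 + i) ^ 2 := by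
      rw [Finset.sum_add_distrib, Finset.mul_sum, Finset.sum_const, Finset.card_range, nsmul_eq_mul]
      push_cast
      ring
    rw [← this]
    apply Finset.sum_le_sum
    intro j hj
    rw [y_one k hk α β γ x j (Finset.mem_range.1 hj)]
    nlinarith [sq_nonneg (γ * x 0 - β * x (1 + j))]
  have b3 : ∑ j ∈ Finset.range (k + 1),
        (∑ i ∈ Finset.range (3 * (k + 1)), entE (k + 1) α β γ i (2 * k + 2 + j) * x i) ^ 2
      = β ^ 2 * ∑ i ∈ Finset.range (k + 1), x (2 * k + 2 + i) ^ 2 := by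
    apply cmul_sum
    intro i hi
    rw [y_three k hk α β γ x i hi]; ring
  have b2 : ∑ j ∈ Finset.range (k + 1),
        (∑ i ∈ Finset.range (3 * (k + 1)), entE (k + 1) α β γ i (k + 1 + j) * x i) ^ 2
      ≤ 2 * P 0 ^ 2 + 2 * P (k + 1) ^ 2 + 4 * α ^ 2 * ∑ i ∈ Finset.range k, x (k + 2 + i) ^ 2 := by
    have e : α ^ 2 * ∑ i ∈ Finset.range k, x (k + 2 + i) ^ 2 = ∑ i ∈ Finset.range k, P (i + 1) ^ 2 := by
      symm
      apply cmul_sum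
      intro i hi
      rw [hPi i hi]; ring
    have f1 : ∑ j ∈ Finset.range (k + 1), P (j + 1) ^ 2
        = ∑ i ∈ Finset.range k, P (i + 1) ^ 2 + P (k + 1) ^ 2 := Finset.sum_range_succ _ _
    have f2 : ∑ j ∈ Finset.range (k + 1), P j ^ 2
        = ∑ i ∈ Finset.range k, P (i + 1) ^ 2 + P 0 ^ 2 := Finset.sum_range_succ' (fun j => P j ^ 2) _
    have : ∑ j ∈ Finset.range (k + 1),
        (∑ i ∈ Finset.range (3 * (k + 1)), entE (k + 1) α β γ i (k + 1 + j) * x i) ^ 2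
        ≤ ∑ j ∈ Finset.range (k + 1), (2 * P (j + 1) ^ 2 + 2 * P j ^ 2) := by
      apply Finset.sum_le_sum
      intro j hj
      rw [y_two k hk α β γ x j (by have := Finset.mem_range.1 hj; omega)]
      nlinarith [sq_nonneg (P (j + 1) + P j)]
    rw [Finset.sum_add_distrib, ← Finset.mul_sum, ← Finset.mul_sum, f1, f2] at this
    linarith
  have c1 := mul_le_mul_of_nonneg_left (cs (k + 1) (fun l => x (1 + l))) (sq_nonneg β)
  have c2 := mul_le_mul_of_nonneg_left (cs (k + 1) (fun l => x (2 * k + 2 + l))) (sq_nonneg β)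
  rw [hP0, hPk, neg_sq, mul_pow, mul_pow] at b2
  push_cast at c1 c2
  rw [b3]
  have sU : 0 ≤ ∑ i ∈ Finset.range (k + 1), x (1 + i) ^ 2 := Finset.sum_nonneg fun _ _ => sq_nonneg _
  have sW : 0 ≤ ∑ i ∈ Finset.range (k + 1), x (2 * k + 2 + i) ^ 2 :=
    Finset.sum_nonneg fun _ _ => sq_nonneg _
  have sP : 0 ≤ ∑ i ∈ Finset.range k, x (k + 2 + i) ^ 2 := Finset.sum_nonneg fun _ _ => sq_nonneg _
  have a0 : 2 * ((k : ℝ) + 1) * γ ^ 2 * x 0 ^ 2 ≤ m * x 0 ^ 2 := by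
    rcases hmγ with h | h
    · exact mul_le_mul_of_nonneg_right h (sq_nonneg (x 0))
    · rw [h]; simp
  have a1 := mul_le_mul_of_nonneg_right hmβ sU
  have a2 := mul_le_mul_of_nonneg_right hmβ sW
  have a3 := mul_le_mul_of_nonneg_right hmα sP
  have a4 := mul_nonneg (sq_nonneg β) sW
  linarith

lemma quad {a b : ℕ} (M : Matrix (Fin a) (Fin b) ℝ) (x : Fin a → ℝ) :
    x ⬝ᵥ ((M * Mᵀ) *ᵥ x) = ∑ j, (∑ i, M i j * x i) ^ 2 := by
  rw [← Matrix.mulVec_mulVec, Matrix.dotProduct_mulVec, ← Matrix.mulVec_transpose]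
  simp [dotProduct, Matrix.mulVec, sq]

lemma psd_lower {a b : ℕ} (M : Matrix (Fin a) (Fin b) ℝ) (c : ℝ)
    (h : ∀ x : Fin a → ℝ, c * ∑ i, x i ^ 2 ≤ ∑ j, (∑ i, M i j * x i) ^ 2) :
    Matrix.PosSemidef (M * Mᵀ - c • (1 : Matrix (Fin a) (Fin a) ℝ)) := by
  apply Matrix.PosSemidef.of_dotProduct_mulVec_nonneg
  · simp [Matrix.IsHermitian, Matrix.conjTranspose_eq_transpose_of_trivial]
  · intro x
    have := h x
    rw [star_trivial, Matrix.sub_mulVec, dotProduct_sub, quad, Matrix.smul_mulVec,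
      Matrix.one_mulVec, dotProduct_smul]
    simp only [dotProduct, ← sq, smul_eq_mul]
    linarith

lemma psd_upper {a b : ℕ} (M : Matrix (Fin a) (Fin b) ℝ) (c : ℝ)
    (h : ∀ x : Fin a → ℝ, ∑ j, (∑ i, M i j * x i) ^ 2 ≤ c * ∑ i, x i ^ 2) :
    Matrix.PosSemidef (c • (1 : Matrix (Fin a) (Fin a) ℝ) - M * Mᵀ) := by
  apply Matrix.PosSemidef.of_dotProduct_mulVec_nonneg
  · simp [Matrix.IsHermitian, Matrix.conjTranspose_eq_transpose_of_trivial]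
  · intro x
    have := h x
    rw [star_trivial, Matrix.sub_mulVec, dotProduct_sub, quad, Matrix.smul_mulVec,
      Matrix.one_mulVec, dotProduct_smul]
    simp only [dotProduct, ← sq, smul_eq_mul]
    linarith


/-- Spectral bounds for the structured matrix `E` (and its first-row-deleted
version `E'`) from the lower-bound construction. -/
theorem spectral_bounds_E (n : ℕ) (hn : 2 ≤ n) (α β γ : ℝ)
    (hα : 0 < α) (hβ : 0 < β) (hγ : 0 < γ)
    (E : Matrix (Fin (3 * n)) (Fin (3 * n)) ℝ)
    (hE : ∀ i j : Fin (3 * n), E i j =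
      if i.val = 0 then (if j.val < n then γ else 0)
      else if i.val ≤ n then (if j.val + 1 = i.val then β else if j.val = n then -β else 0)
      else if i.val ≤ 2 * n - 1 then
        (if j.val + 1 = i.val then α else if j.val = i.val then -α else 0)
      else (if j.val = 2 * n - 1 then -β else if j.val = i.val then β else 0))
    (E' : Matrix (Fin (3 * n - 1)) (Fin (3 * n)) ℝ)
    (hE' : ∀ (i : Fin (3 * n - 1)) (j : Fin (3 * n)),
      E' i j = E ⟨i.val + 1, by have := i.isLt; omega⟩ j) :
    (Matrix.PosSemidef (E * Eᵀ -
        min ((n : ℝ) * γ ^ 2 / 4) (min (β ^ 2 / 36) (α ^ 2 / (9 * (n : ℝ) ^ 2))) •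
          (1 : Matrix (Fin (3 * n)) (Fin (3 * n)) ℝ)) ∧
      Matrix.PosSemidef
        (max (2 * (n : ℝ) * γ ^ 2) (max (2 * ((n : ℝ) + 1) * β ^ 2) (4 * α ^ 2)) •
          (1 : Matrix (Fin (3 * n)) (Fin (3 * n)) ℝ) - E * Eᵀ)) ∧
    (Matrix.PosSemidef (E' * E'ᵀ -
        min (β ^ 2 / 36) (α ^ 2 / (9 * (n : ℝ) ^ 2)) •
          (1 : Matrix (Fin (3 * n - 1)) (Fin (3 * n - 1)) ℝ)) ∧
      Matrix.PosSemidef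
        (max (2 * ((n : ℝ) + 1) * β ^ 2) (4 * α ^ 2) •
          (1 : Matrix (Fin (3 * n - 1)) (Fin (3 * n - 1)) ℝ) - E' * E'ᵀ)) := by
  obtain ⟨k, rfl⟩ : ∃ k, n = k + 1 := ⟨n - 1, by omega⟩
  have hk : 1 ≤ k := by omega
  have hE2 : ∀ i j : Fin (3 * (k + 1)), E i j = entE (k + 1) α β γ i.val j.val := hE
  have hE3 : ∀ (i : Fin (3 * (k + 1) - 1)) (j : Fin (3 * (k + 1))),
      E' i j = entE (k + 1) α β γ (i.val + 1) j.val := fun i j => by rw [hE', hE2]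
  have key : ∀ x : Fin (3 * (k + 1)) → ℝ, ∃ X : ℕ → ℝ,
      ∑ i, x i ^ 2 = ∑ i ∈ Finset.range (3 * (k + 1)), X i ^ 2 ∧
      ∑ j, (∑ i, E i j * x i) ^ 2 = ∑ j ∈ Finset.range (3 * (k + 1)),
        (∑ i ∈ Finset.range (3 * (k + 1)), entE (k + 1) α β γ i j * X i) ^ 2 := by
    intro x
    refine ⟨fun i => if h : i < 3 * (k + 1) then x ⟨i, h⟩ else 0, ?_, ?_⟩
    · rw [Finset.sum_range]; simp
    · rw [Finset.sum_range]
      simp only [Finset.sum_range, hE2, Fin.is_lt, dite_true]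
  have key' : ∀ x : Fin (3 * (k + 1) - 1) → ℝ, ∃ X : ℕ → ℝ, X 0 = 0 ∧
      ∑ i, x i ^ 2 = ∑ i ∈ Finset.range (3 * (k + 1)), X i ^ 2 ∧
      ∑ j, (∑ i, E' i j * x i) ^ 2 = ∑ j ∈ Finset.range (3 * (k + 1)),
        (∑ i ∈ Finset.range (3 * (k + 1)), entE (k + 1) α β γ i j * X i) ^ 2 := by
    intro x
    have e : Finset.range (3 * (k + 1)) = Finset.range ((3 * (k + 1) - 1) + 1) := by
      congr 1
    refine ⟨fun i => if h : i - 1 < 3 * (k + 1) - 1 then (if i = 0 then 0 else x ⟨i - 1, h⟩) else 0,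
      by simp, ?_, ?_⟩
    · rw [e, Finset.sum_range_succ', Finset.sum_range]; simp
    · rw [Finset.sum_range]
      apply Finset.sum_congr rfl
      intro j _
      rw [e, Finset.sum_range_succ', Finset.sum_range]
      simp [hE3]
  push_cast
  refine ⟨⟨psd_lower _ _ ?_, psd_upper _ _ ?_⟩, psd_lower _ _ ?_, psd_upper _ _ ?_⟩
  · intro x
    obtain ⟨X, h1, h2⟩ := key x
    rw [h1, h2]
    exact lower k hk α β γ _ X ((min_le_right _ _).trans (min_le_left _ _))
      ((min_le_right _ _).trans (min_le_right _ _)) (Or.inl (min_le_left _ _))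
  · intro x
    obtain ⟨X, h1, h2⟩ := key x
    rw [h1, h2]
    exact upper k hk α β γ _ X ((le_max_left _ _).trans (le_max_right _ _))
      ((le_max_right _ _).trans (le_max_right _ _)) (Or.inl (le_max_left _ _))
  · intro x
    obtain ⟨X, h0, h1, h2⟩ := key' x
    rw [h1, h2]
    exact lower k hk α β γ _ X (min_le_left _ _) (min_le_right _ _) (Or.inr h0)
  · intro x
    obtain ⟨X, h0, h1, h2⟩ := key' x
    rw [h1, h2]
    exact upper k hk α β γ _ X (le_max_left _ _) (le_max_right _ _) (Or.inr h0)
end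

section
/- Let μx, μy, μxy, μyx ≥ 0 and Ly, Lxy > 0 satisfy: μyx > 0, Ly > 4μy, Lxy > 18μyx, μxy ≤ μyx, and μx·μy ≤ μyx². Define δ̃ := μx + 4μxy²/Ly, α := Lxy/2, n := ⌊Lxy/(6μyx)⌋, and q := (√(4α² + δ̃μy) − √(δ̃μy)) / (√(4α² + δ̃μy) + √(δ̃μy)). Then q^{−n} ≤ 2. -/
/-- The quantity `q^{-n}` is bounded by `2`, where `n = ⌊Lxy/(6μyx)⌋` and `q` is
the smaller root of the characteristic polynomial of the linear recurrence. -/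
theorem q_pow_neg_n_le_two (μx μy μxy μyx Ly Lxy : ℝ)
    (hμx : 0 ≤ μx) (hμy : 0 ≤ μy) (hμxy : 0 ≤ μxy) (hμyx' : 0 ≤ μyx)
    (hLy : 0 < Ly) (hLxy : 0 < Lxy)
    (hμyx : 0 < μyx) (hLy4 : 4 * μy < Ly) (hLxy18 : 18 * μyx < Lxy)
    (hxyyx : μxy ≤ μyx) (hprod : μx * μy ≤ μyx ^ 2)
    (dt α q : ℝ) (n : ℕ)
    (hdt : dt = μx + 4 * μxy ^ 2 / Ly)
    (hα : α = Lxy / 2)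
    (hn : n = ⌊Lxy / (6 * μyx)⌋₊)
    (hq : q = (Real.sqrt (4 * α ^ 2 + dt * μy) - Real.sqrt (dt * μy)) /
        (Real.sqrt (4 * α ^ 2 + dt * μy) + Real.sqrt (dt * μy))) :
    q ^ (-(n : ℤ)) ≤ 2 := by
  have hD0 : 0 ≤ dt := by rw [hdt]; positivity
  have hs2 : dt * μy ≤ 2 * μyx ^ 2 := by
    have h1 : 4 * μxy ^ 2 / Ly * μy ≤ μxy ^ 2 := by
      rw [div_mul_eq_mul_div, div_le_iff₀ hLy]
      nlinarith [sq_nonneg μxy]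
    have h2 : μxy ^ 2 ≤ μyx ^ 2 := pow_le_pow_left₀ hμxy hxyyx 2
    rw [hdt, add_mul]
    linarith
  have hp0 : 0 ≤ dt * μy := mul_nonneg hD0 hμy
  set s := Real.sqrt (dt * μy) with hs
  have hs0 : 0 ≤ s := Real.sqrt_nonneg _
  have hsle : s ≤ 3 / 2 * μyx := by
    apply Real.sqrt_le_iff.2
    constructor
    · positivity
    · nlinarith [sq_nonneg μyx]
  set A := Real.sqrt (4 * α ^ 2 + dt * μy) with hA
  have hAL : Lxy ≤ A := by
    apply Real.le_sqrt_of_sq_le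
    rw [hα]
    nlinarith
  have hden : 0 < A + s := by linarith
  have hnle : (n : ℝ) * (6 * μyx) ≤ Lxy := by
    rw [← le_div_iff₀ (by positivity), hn]
    exact Nat.floor_le (by positivity)
  have hq1 : q = 1 + -(2 * s / (A + s)) := by
    rw [hq]; field_simp; ring
  have hle1 : 2 * s / (A + s) ≤ 2 := by
    rw [div_le_iff₀ hden]; linarith
  have hB := one_add_mul_le_pow (a := -(2 * s / (A + s))) (by linarith) n
  rw [← hq1] at hB
  have hns : (n : ℝ) * (2 * s / (A + s)) ≤ 1 / 2 := by
    rw [← mul_div_assoc, div_le_iff₀ hden]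
    have : (n : ℝ) * s ≤ n * (3 / 2 * μyx) := by gcongr
    linarith
  have hqn : 1 / 2 ≤ q ^ n := by linarith
  rw [zpow_neg, zpow_natCast]
  calc (q ^ n)⁻¹ ≤ (1 / 2 : ℝ)⁻¹ := inv_anti₀ (by norm_num) hqn
    _ = 2 := by norm_num
end

section
/- Let μx, μy, μxy, μyx ≥ 0 and Ly, Lxy > 0 satisfy: μyx > 0, μy > 0, Ly > 4μy, Lxy > 18μyx, μxy ≤ μyx, μx·μy ≤ μyx², and δ̃ := μx + 4μxy²/Ly > 0. Define α := Lxy/2, n := ⌊Lxy/(6μyx)⌋, and q := (√(4α² + δ̃μy) − √(δ̃μy)) / (√(4α² + δ̃μy) + √(δ̃μy)). Then ω := (1−q)(1−q^{n−2})/(1+q^{n−1}) satisfies ω ≤ (n−2)·δ̃·μy/α², and ν := (1−q)(1+q)/(q·(q^{1−n} − q^{n−1})) satisfies ν ≥ 1/(4(n−1)). -/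
set_option maxHeartbeats 1000000 in
/-- Bounds on the auxiliary quantities `ω` and `ν` built from the root `q` of the
characteristic polynomial: `ω ≤ (n−2)δ̃μy/α²` and `ν ≥ 1/(4(n−1))`. -/
theorem omega_nu_bounds (μx μy μxy μyx Ly Lxy : ℝ)
    (hμx : 0 ≤ μx) (hμy' : 0 ≤ μy) (hμxy : 0 ≤ μxy) (hμyx' : 0 ≤ μyx)
    (hLy : 0 < Ly) (hLxy : 0 < Lxy)
    (hμyx : 0 < μyx) (hμy : 0 < μy) (hLy4 : 4 * μy < Ly) (hLxy18 : 18 * μyx < Lxy)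
    (hxyyx : μxy ≤ μyx) (hprod : μx * μy ≤ μyx ^ 2)
    (dt α q ω ν : ℝ) (n : ℕ)
    (hdt : dt = μx + 4 * μxy ^ 2 / Ly) (hdtpos : 0 < dt)
    (hα : α = Lxy / 2)
    (hn : n = ⌊Lxy / (6 * μyx)⌋₊)
    (hq : q = (Real.sqrt (4 * α ^ 2 + dt * μy) - Real.sqrt (dt * μy)) /
        (Real.sqrt (4 * α ^ 2 + dt * μy) + Real.sqrt (dt * μy)))
    (hω : ω = (1 - q) * (1 - q ^ ((n : ℤ) - 2)) / (1 + q ^ ((n : ℤ) - 1)))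
    (hν : ν = (1 - q) * (1 + q) / (q * (q ^ (1 - (n : ℤ)) - q ^ ((n : ℤ) - 1)))) :
    ω ≤ ((n : ℝ) - 2) * dt * μy / α ^ 2 ∧ 1 / (4 * ((n : ℝ) - 1)) ≤ ν := by
  have hμy_Ly : 4 * μxy ^ 2 / Ly * μy ≤ μyx ^ 2 := by
    rw [div_mul_eq_mul_div, div_le_iff₀ hLy]
    have h1 : μxy ^ 2 ≤ μyx ^ 2 := by gcongr
    nlinarith [mul_le_mul h1 hLy4.le (by positivity) (by positivity)]
  have ht : dt * μy ≤ 2 * μyx ^ 2 := by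
    rw [hdt, add_mul]; linarith
  have htpos : 0 < dt * μy := mul_pos hdtpos hμy
  have hαpos : 0 < α := by rw [hα]; linarith
  have hspos : 0 < Real.sqrt (dt * μy) := Real.sqrt_pos.2 htpos
  have hs2 : Real.sqrt (dt * μy) ^ 2 = dt * μy := Real.sq_sqrt htpos.le
  have hA2 : Real.sqrt (4 * α ^ 2 + dt * μy) ^ 2 = 4 * α ^ 2 + dt * μy :=
    Real.sq_sqrt (by positivity)
  have hA0 : 0 ≤ Real.sqrt (4 * α ^ 2 + dt * μy) := Real.sqrt_nonneg _
  generalize Real.sqrt (4 * α ^ 2 + dt * μy) = A at *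
  generalize Real.sqrt (dt * μy) = s at *
  have hsA : s < A := by
    apply lt_of_pow_lt_pow_left₀ 2 hA0
    rw [hs2, hA2]; nlinarith [pow_pos hαpos 2]
  have hA2α : 2 * α ≤ A := by
    apply le_of_lt
    apply lt_of_pow_lt_pow_left₀ 2 hA0
    nlinarith
  have hs2μ : s ≤ 2 * μyx := by
    apply le_of_lt
    apply lt_of_pow_lt_pow_left₀ 2 (by positivity)
    nlinarith [pow_pos hμyx 2]
  have hAs : 0 < A + s := by linarith
  have hqpos : 0 < q := by rw [hq]; apply div_pos <;> linarith
  have h1q : 1 - q = 2 * s / (A + s) := by rw [hq]; field_simp; ring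
  have h1qpos : 0 < 1 - q := by rw [h1q]; positivity
  have hkey : (1 - q) ^ 2 = q * (dt * μy / α ^ 2) := by
    have hq' : q * (A + s) = A - s := by rw [hq]; field_simp
    have h1 : (1 - q) * (A + s) = 2 * s := by linarith
    have h2 : (A - s) * (A + s) = 4 * α ^ 2 := by linarith
    rw [← mul_div_assoc, eq_div_iff (by positivity)]
    have h3 : (A + s) ^ 2 ≠ 0 := by positivity
    apply mul_right_cancel₀ h3
    calc (1 - q) ^ 2 * α ^ 2 * (A + s) ^ 2 = ((1 - q) * (A + s)) ^ 2 * α ^ 2 := by ring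
      _ = s ^ 2 * (4 * α ^ 2) := by rw [h1]; ring
      _ = s ^ 2 * (q * (A + s) * (A + s)) := by rw [hq', h2]
      _ = _ := by rw [hs2]; ring
  have hn3 : 3 ≤ n := by
    rw [hn]; apply Nat.le_floor
    rw [le_div_iff₀ (by positivity)]; push_cast; linarith
  have hnle : (n : ℝ) * (6 * μyx) ≤ Lxy := by
    rw [← le_div_iff₀ (by positivity), hn]; exact Nat.floor_le (by positivity)
  clear hn hq
  obtain ⟨m, rfl⟩ : ∃ m, n = m + 2 := ⟨n - 2, by omega⟩
  have e1 : (((m + 2 : ℕ) : ℤ) - 2) = (m : ℤ) := by push_cast; ring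
  have e2 : (((m + 2 : ℕ) : ℤ) - 1) = ((m + 1 : ℕ) : ℤ) := by push_cast; ring
  have e3 : (1 - ((m + 2 : ℕ) : ℤ)) = -((m + 1 : ℕ) : ℤ) := by push_cast; ring
  rw [e1, e2, zpow_natCast, zpow_natCast] at hω
  rw [e2, e3, zpow_neg, zpow_natCast] at hν
  have r1 : (((m + 2 : ℕ) : ℝ) - 2) = (m : ℝ) := by push_cast; ring
  have r2 : (((m + 2 : ℕ) : ℝ) - 1) = (m : ℝ) + 1 := by push_cast; ring
  rw [r1, r2]
  have hbern : 1 - m * (1 - q) ≤ q ^ m := by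
    have := one_add_mul_le_pow (a := q - 1) (by linarith) m
    rw [add_sub_cancel] at this
    linarith
  have hm0 : (0 : ℝ) ≤ m := Nat.cast_nonneg m
  have hqm : q ^ m ≤ 1 := pow_le_one₀ hqpos.le (by linarith)
  constructor
  · have hp : 0 < q ^ (m + 1) := by positivity
    rw [hω]
    calc (1 - q) * (1 - q ^ m) / (1 + q ^ (m + 1)) ≤ (1 - q) * (1 - q ^ m) :=
          div_le_self (mul_nonneg h1qpos.le (by linarith)) (by linarith)
      _ ≤ (1 - q) * (m * (1 - q)) := by gcongr; linarith
      _ = m * (q * (dt * μy / α ^ 2)) := by rw [← hkey]; ring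
      _ ≤ m * (1 * (dt * μy / α ^ 2)) := by gcongr; linarith
      _ = _ := by ring
  · have hquarter : 1 / 4 ≤ q ^ m := by
      have h1 : 1 - q ≤ 2 * s / Lxy := by
        rw [h1q]; gcongr; linarith
      have h2 : m * (1 - q) ≤ 3 / 4 := by
        calc m * (1 - q) ≤ m * (2 * s / Lxy) := by gcongr
          _ = m * (2 * s) / Lxy := by ring
          _ ≤ 3 / 4 := by
            rw [div_le_iff₀ hLxy]
            push_cast at hnle
            nlinarith [mul_le_mul_of_nonneg_left hs2μ hm0]
      linarith
    have hden : 0 < 1 - (q ^ 2) ^ (m + 1) := by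
      have : (q ^ 2) ^ (m + 1) < 1 := pow_lt_one₀ (by positivity) (pow_lt_one₀ hqpos.le (by linarith) (by norm_num)) (by omega)
      linarith
    have hbern2 : 1 - (q ^ 2) ^ (m + 1) ≤ (m + 1) * (1 - q ^ 2) := by
      have := one_add_mul_le_pow (a := q ^ 2 - 1) (by linarith [sq_nonneg q]) (m + 1)
      rw [add_sub_cancel] at this
      push_cast at this
      linarith
    have hν' : ν = (1 - q ^ 2) * q ^ m / (1 - (q ^ 2) ^ (m + 1)) := by
      have hd : q * ((q ^ (m + 1))⁻¹ - q ^ (m + 1)) = (1 - (q ^ 2) ^ (m + 1)) / q ^ m := by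
        field_simp
        ring
      rw [hν, hd, div_div_eq_mul_div]
      ring
    rw [hν', div_le_div_iff₀ (by positivity) hden]
    have h3 : 0 ≤ (m + 1) * (1 - q ^ 2) := hden.le.trans hbern2
    nlinarith [mul_le_mul_of_nonneg_left hquarter h3]
end

section
/- Let L ≥ μ̄ ≥ 0 and d ≥ 1 an integer. Define B ∈ ℝ^{d×d} (1-indexed) by B(i,i) = (L+μ̄)/2 for 1 ≤ i ≤ d, B(i,i+1) = −(L−μ̄)/2 for 1 ≤ i ≤ d−1, and all other entries 0. Then μ̄²·I_d ⪯ Bᵀ·B ⪯ L²·I_d; equivalently, every singular value σ of B satisfies μ̄ ≤ σ ≤ L. -/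
open scoped Matrix

/-- Extension by zero of a vector. -/
noncomputable def extZero {d : ℕ} (x : Fin d → ℝ) (n : ℕ) : ℝ :=
  if h : n < d then x ⟨n, h⟩ else 0

theorem bidiag_mulVec (d : ℕ) (a b : ℝ) (B : Matrix (Fin d) (Fin d) ℝ)
    (hB : ∀ i j : Fin d, B i j =
      if j = i then a else if j.val = i.val + 1 then -b else 0) (x : Fin d → ℝ) (i : Fin d) :
    (B *ᵥ x) i = a * extZero x i - b * extZero x (i + 1) := by
  have h1 : ∀ j : Fin d, B i j * x j =
      (if j = i then a * x j else 0) + (if j.val = i.val + 1 then -b * x j else 0) := by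
    intro j
    rw [hB]
    by_cases h : j = i
    · subst h; simp
    · simp [h]
  simp only [Matrix.mulVec, dotProduct]
  simp_rw [h1]
  rw [Finset.sum_add_distrib, Finset.sum_ite_eq' Finset.univ i]
  have h2 : ∑ j : Fin d, (if j.val = i.val + 1 then -b * x j else 0)
      = -b * extZero x (i + 1) := by
    unfold extZero
    split_ifs with h
    · rw [Finset.sum_eq_single ⟨i.val + 1, h⟩]
      · simp
      · intro j _ hj
        rw [if_neg]
        intro h'
        exact hj (Fin.ext h')
      · simp
    · rw [mul_zero]
      apply Finset.sum_eq_zero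
      intro j _
      rw [if_neg]
      have := j.isLt
      omega
  have h3 : extZero x i = x i := by simp [extZero]
  rw [h2, h3, if_pos (Finset.mem_univ i), neg_mul, ← sub_eq_add_neg]

theorem bidiag_sums (d : ℕ) (x : Fin d → ℝ) :
    ∑ i : Fin d, extZero x (i + 1) ^ 2 ≤ ∑ i : Fin d, extZero x i ^ 2 := by
  rw [Fin.sum_univ_eq_sum_range (fun n => extZero x (n + 1) ^ 2) d,
    Fin.sum_univ_eq_sum_range (fun n => extZero x n ^ 2) d]
  have h1 := Finset.sum_range_succ (fun n => extZero x n ^ 2) d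
  have h2 := Finset.sum_range_succ' (fun n => extZero x n ^ 2) d
  have h3 : extZero x d = 0 := by simp [extZero]
  rw [h3] at h1
  nlinarith [sq_nonneg (extZero x 0)]

theorem bidiag_quad (d : ℕ) (a b : ℝ) (hb : 0 ≤ b) (hab : b ≤ a) (x : Fin d → ℝ) :
    (a - b) ^ 2 * ∑ i : Fin d, extZero x i ^ 2
      ≤ ∑ i : Fin d, (a * extZero x i - b * extZero x (i + 1)) ^ 2 ∧
    ∑ i : Fin d, (a * extZero x i - b * extZero x (i + 1)) ^ 2
      ≤ (a + b) ^ 2 * ∑ i : Fin d, extZero x i ^ 2 := by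
  have hs := bidiag_sums d x
  have hab' : 0 ≤ a * b := mul_nonneg (hb.trans hab) hb
  have l1 : a * (a - b) * ∑ i : Fin d, extZero x i ^ 2
      - b * (a - b) * ∑ i : Fin d, extZero x (i + 1) ^ 2 ≤
      ∑ i : Fin d, (a * extZero x i - b * extZero x (i + 1)) ^ 2 := by
    rw [Finset.mul_sum, Finset.mul_sum, ← Finset.sum_sub_distrib]
    apply Finset.sum_le_sum
    intro i _
    nlinarith [mul_nonneg hab' (sq_nonneg (extZero x i - extZero x (i + 1)))]
  have l2 : ∑ i : Fin d, (a * extZero x i - b * extZero x (i + 1)) ^ 2 ≤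
      a * (a + b) * ∑ i : Fin d, extZero x i ^ 2
      + b * (a + b) * ∑ i : Fin d, extZero x (i + 1) ^ 2 := by
    rw [Finset.mul_sum, Finset.mul_sum, ← Finset.sum_add_distrib]
    apply Finset.sum_le_sum
    intro i _
    nlinarith [mul_nonneg hab' (sq_nonneg (extZero x i + extZero x (i + 1)))]
  have c1 := mul_le_mul_of_nonneg_left hs (mul_nonneg hb (sub_nonneg.2 hab))
  have c2 := mul_le_mul_of_nonneg_left hs (mul_nonneg hb (add_nonneg (hb.trans hab) hb))
  constructor <;> nlinarith

/-- The bidiagonal matrix with diagonal `(L+μ̄)/2` and superdiagonal `−(L−μ̄)/2`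
has all singular values between `μ̄` and `L`: `μ̄² I ⪯ BᵀB ⪯ L² I`. -/
theorem bidiagonal_singular_value_bounds (d : ℕ) (hd : 1 ≤ d) (L μ : ℝ)
    (hμ : 0 ≤ μ) (hL : μ ≤ L)
    (B : Matrix (Fin d) (Fin d) ℝ)
    (hB : ∀ i j : Fin d, B i j =
      if j = i then (L + μ) / 2
      else if j.val = i.val + 1 then -((L - μ) / 2) else 0) :
    Matrix.PosSemidef (Bᵀ * B - μ ^ 2 • (1 : Matrix (Fin d) (Fin d) ℝ)) ∧
    Matrix.PosSemidef (L ^ 2 • (1 : Matrix (Fin d) (Fin d) ℝ) - Bᵀ * B) := by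
  have hq : ∀ x : Fin d → ℝ, μ ^ 2 * (x ⬝ᵥ x) ≤ x ⬝ᵥ ((Bᵀ * B) *ᵥ x) ∧
      x ⬝ᵥ ((Bᵀ * B) *ᵥ x) ≤ L ^ 2 * (x ⬝ᵥ x) := by
    intro x
    have e1 : x ⬝ᵥ ((Bᵀ * B) *ᵥ x) = ∑ i : Fin d,
        ((L + μ) / 2 * extZero x i - (L - μ) / 2 * extZero x (i + 1)) ^ 2 := by
      rw [← Matrix.mulVec_mulVec, Matrix.dotProduct_mulVec, Matrix.vecMul_transpose]
      simp only [dotProduct, bidiag_mulVec d _ _ B hB x, pow_two]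
    have e2 : x ⬝ᵥ x = ∑ i : Fin d, extZero x i ^ 2 := by
      simp [dotProduct, extZero, pow_two]
    have h := bidiag_quad d ((L + μ) / 2) ((L - μ) / 2) (by linarith) (by linarith) x
    rw [show (L + μ) / 2 - (L - μ) / 2 = μ by ring,
      show (L + μ) / 2 + (L - μ) / 2 = L by ring] at h
    rw [e1, e2]
    exact h
  constructor
  · refine Matrix.PosSemidef.of_dotProduct_mulVec_nonneg ?_ fun x => ?_
    · simp [Matrix.IsHermitian, Matrix.conjTranspose_eq_transpose_of_trivial]
    · have := (hq x).1
      simp only [star_trivial, Matrix.sub_mulVec, Matrix.smul_mulVec, Matrix.one_mulVec,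
        dotProduct_sub, dotProduct_smul, smul_eq_mul]
      linarith
  · refine Matrix.PosSemidef.of_dotProduct_mulVec_nonneg ?_ fun x => ?_
    · simp [Matrix.IsHermitian, Matrix.conjTranspose_eq_transpose_of_trivial]
    · have := (hq x).2
      simp only [star_trivial, Matrix.sub_mulVec, Matrix.smul_mulVec, Matrix.one_mulVec,
        dotProduct_sub, dotProduct_smul, smul_eq_mul]
      linarith
end

section
/- Let μx, μy > 0, μxy, μyx ≥ 0, Lx, Ly > 0, set μ̄ := max{μxy, μyx}, and assume Lxy > 18·max{μ̄, √(μx·μy)}. Define q := (Lxy² + μx·μy)/(μ̄² + μx·μy) and ρ := (√q − 1)/(√q + 1). Then ρ ≥ 4/5. Moreover, if additionally μx·μy ≥ max{μxy², μyx²}, then ρ ≥ 1 − √8/√κxy, where κxy := Lxy²/(δx·δy) with δx := μx + μxy²/Ly and δy := μy + μyx²/Lx. -/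
/-- Lower bounds on the contraction factor `ρ = (√q−1)/(√q+1)` with
`q = (Lxy² + μxμy)/(μ̄² + μxμy)`: always `ρ ≥ 4/5`, and if moreover
`μxμy ≥ max{μxy², μyx²}` then `ρ ≥ 1 − √8/√κxy`. -/
theorem rho_lower_bounds (μx μy μxy μyx Lx Ly Lxy : ℝ)
    (hμx : 0 < μx) (hμy : 0 < μy) (hμxy : 0 ≤ μxy) (hμyx : 0 ≤ μyx)
    (hLx : 0 < Lx) (hLy : 0 < Ly)
    (hLxy : Lxy > 18 * max (max μxy μyx) (Real.sqrt (μx * μy)))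
    (q ρ : ℝ)
    (hq : q = (Lxy ^ 2 + μx * μy) / ((max μxy μyx) ^ 2 + μx * μy))
    (hρ : ρ = (Real.sqrt q - 1) / (Real.sqrt q + 1)) :
    ρ ≥ 4 / 5 ∧
      (μx * μy ≥ max (μxy ^ 2) (μyx ^ 2) →
        ρ ≥ 1 - Real.sqrt 8 /
          Real.sqrt (Lxy ^ 2 / ((μx + μxy ^ 2 / Ly) * (μy + μyx ^ 2 / Lx)))) := by
  have hp : 0 < μx * μy := mul_pos hμx hμy
  have hm0 : 0 ≤ max μxy μyx := le_max_of_le_left hμxy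
  have h1 : 18 * max μxy μyx < Lxy :=
    lt_of_le_of_lt (mul_le_mul_of_nonneg_left (le_max_left _ _) (by norm_num)) hLxy
  have h2 : 18 * Real.sqrt (μx * μy) < Lxy :=
    lt_of_le_of_lt (mul_le_mul_of_nonneg_left (le_max_right _ _) (by norm_num)) hLxy
  have hs : Real.sqrt (μx * μy) ^ 2 = μx * μy := Real.sq_sqrt hp.le
  have hs0 : 0 ≤ Real.sqrt (μx * μy) := Real.sqrt_nonneg _
  have hL : 0 < Lxy := by linarith
  have hm2 : max μxy μyx ^ 2 = max (μxy ^ 2) (μyx ^ 2) := by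
    rcases le_total μxy μyx with h | h
    · rw [max_eq_right h, max_eq_right (by gcongr)]
    · rw [max_eq_left h, max_eq_left (by gcongr)]
  have e1 : 324 * max μxy μyx ^ 2 ≤ Lxy ^ 2 := by nlinarith
  have e2 : 324 * (μx * μy) ≤ Lxy ^ 2 := by nlinarith
  have hd : 0 < max μxy μyx ^ 2 + μx * μy := by positivity
  have hq81 : 81 ≤ q := by
    rw [hq, le_div_iff₀ hd]; linarith
  have hsq9 : 9 ≤ Real.sqrt q := Real.le_sqrt_of_sq_le (by linarith)
  have hq1 : 0 < Real.sqrt q + 1 := by linarith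
  refine ⟨?_, fun h => ?_⟩
  · rw [hρ, ge_iff_le, le_div_iff₀ hq1]; linarith
  · rw [← hm2] at h
    have hδ : μx * μy ≤ (μx + μxy ^ 2 / Ly) * (μy + μyx ^ 2 / Lx) := by
      have a : 0 ≤ μxy ^ 2 / Ly := by positivity
      have b : 0 ≤ μyx ^ 2 / Lx := by positivity
      exact mul_le_mul (by linarith) (by linarith) hμy.le (by linarith)
    set κ := Lxy ^ 2 / ((μx + μxy ^ 2 / Ly) * (μy + μyx ^ 2 / Lx)) with hκ
    have hκ0 : 0 < κ := by positivity
    have k1 : κ ≤ Lxy ^ 2 / (μx * μy) := by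
      rw [hκ]; gcongr
    have k2 : Lxy ^ 2 / (μx * μy) ≤ 2 * q := by
      rw [hq, ← mul_div_assoc, div_le_div_iff₀ hp hd]
      nlinarith [mul_le_mul_of_nonneg_left h (sq_nonneg Lxy), mul_pos hp hp]
    have hκs : 0 < Real.sqrt κ := Real.sqrt_pos.mpr hκ0
    have k3 : 2 * Real.sqrt κ ≤ Real.sqrt 8 * Real.sqrt q := by
      rw [← Real.sqrt_mul (by norm_num)]
      apply Real.le_sqrt_of_sq_le
      rw [mul_pow, Real.sq_sqrt hκ0.le]
      linarith
    have k4 : 2 / (Real.sqrt q + 1) ≤ Real.sqrt 8 / Real.sqrt κ := by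
      rw [div_le_div_iff₀ hq1 hκs]
      nlinarith [Real.sqrt_nonneg 8]
    have k5 : ρ = 1 - 2 / (Real.sqrt q + 1) := by
      rw [hρ]; field_simp; ring
    rw [k5]; linarith
end

section
/- Let α : ℕ → ℝ be defined by α(0) = 1 and α(t+1) = 2/(1 + √(1 + 4/α(t)²)). Then for every t ∈ ℕ: 1/α(t) ≥ (t+2)/2, i.e., α(t) ≤ 2/(t+2). -/
/-- Decay rate of Nesterov's stepsize sequence `α(0) = 1`,
`α(t+1) = 2/(1 + √(1 + 4/α(t)²))`: `1/α(t) ≥ (t+2)/2`, i.e. `α(t) ≤ 2/(t+2)`. -/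
theorem nesterov_alpha_decay (α : ℕ → ℝ) (h0 : α 0 = 1)
    (hrec : ∀ t, α (t + 1) = 2 / (1 + Real.sqrt (1 + 4 / (α t) ^ 2))) :
    ∀ t : ℕ, ((t : ℝ) + 2) / 2 ≤ 1 / α t ∧ α t ≤ 2 / ((t : ℝ) + 2) := by
  have key : ∀ t : ℕ, 0 < α t ∧ ((t : ℝ) + 2) / 2 ≤ 1 / α t := by
    intro t
    induction t with
    | zero => simp [h0]
    | succ t ih =>
      obtain ⟨_, h⟩ := ih
      have hs : (t : ℝ) + 2 ≤ Real.sqrt (1 + 4 / (α t) ^ 2) := by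
        apply Real.le_sqrt_of_sq_le
        have h4 : 4 / (α t) ^ 2 = 4 * (1 / α t) ^ 2 := by
          rw [div_pow, one_pow, mul_one_div]
        have ht : (0 : ℝ) ≤ t := Nat.cast_nonneg t
        rw [h4]
        nlinarith
      rw [hrec t]
      refine ⟨by positivity, ?_⟩
      rw [one_div_div]
      push_cast
      linarith
  intro t
  obtain ⟨hp, h⟩ := key t
  refine ⟨h, ?_⟩
  have ht : (0 : ℝ) < (t : ℝ) + 2 := by positivity
  have h2 := (le_one_div (by positivity) hp).mp h
  rwa [one_div_div] at h2
end

section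
/- Let h : ℝ^d → ℝ be convex and differentiable with L-Lipschitz gradient, L > 0. Let ᾱ, α ∈ (0,1] satisfy 1/α² = 1/ᾱ² + 1/α. Let z̄, z ∈ ℝ^d and define z⁺ := z − (1/(Lα))·∇h(αz + (1−α)z̄) and z̄⁺ := α·z⁺ + (1−α)·z̄. Then for every w ∈ ℝ^d: (L/2)‖z⁺ − w‖² + (1/α²)·(h(z̄⁺) − h(w)) ≤ (L/2)‖z − w‖² + (1/ᾱ²)·(h(z̄) − h(w)). -/
open scoped InnerProductSpace

theorem aux_deriv {E : Type*} [NormedAddCommGroup E] [InnerProductSpace ℝ E] [CompleteSpace E]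
    (h : E → ℝ) (h' : E → E) (hdiff : ∀ x, HasGradientAt h (h' x) x) (x v : E) (t : ℝ) :
    HasDerivAt (fun t : ℝ => h (x + t • v)) ⟪h' (x + t • v), v⟫_ℝ t := by
  have h1 : HasDerivAt (fun t : ℝ => x + t • v) v t := by
    simpa using ((hasDerivAt_id t).smul_const v).const_add x
  have h2 := (hdiff (x + t • v)).hasFDerivAt.comp_hasDerivAt t h1
  simpa [Function.comp_def] using h2

theorem aux_convex {E : Type*} [NormedAddCommGroup E] [InnerProductSpace ℝ E] [CompleteSpace E]
    (h : E → ℝ) (h' : E → E) (hdiff : ∀ x, HasGradientAt h (h' x) x)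
    (hconv : ConvexOn ℝ Set.univ h) (x v : E) :
    h x + ⟪h' x, v⟫_ℝ ≤ h (x + v) := by
  have hc : ConvexOn ℝ Set.univ (fun t : ℝ => h (x + t • v)) := by
    refine ⟨convex_univ, fun s _ t _ p q hp hq hpq => ?_⟩
    have := hconv.2 (Set.mem_univ (x + s • v)) (Set.mem_univ (x + t • v)) hp hq hpq
    convert this using 2
    have hx : x = (p + q) • x := by rw [hpq, one_smul]
    conv_lhs => rw [hx]
    simp only [smul_eq_mul]
    module
  have hd := aux_deriv h h' hdiff x v 0
  have := hc.le_slope_of_hasDerivAt (Set.mem_univ 0) (Set.mem_univ 1) zero_lt_one hd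
  simp [slope_def_field] at this
  linarith

theorem aux_descent {E : Type*} [NormedAddCommGroup E] [InnerProductSpace ℝ E] [CompleteSpace E]
    (h : E → ℝ) (h' : E → E) (hdiff : ∀ x, HasGradientAt h (h' x) x) (L : ℝ)
    (hlip : ∀ x x', ‖h' x - h' x'‖ ≤ L * ‖x - x'‖) (x v : E) :
    h (x + v) ≤ h x + ⟪h' x, v⟫_ℝ + L / 2 * ‖v‖ ^ 2 := by
  have hd : ∀ t : ℝ, HasDerivAt
      (fun t : ℝ => h (x + t • v) - t * ⟪h' x, v⟫_ℝ - t ^ 2 * (L / 2 * ‖v‖ ^ 2))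
      (⟪h' (x + t • v), v⟫_ℝ - ⟪h' x, v⟫_ℝ - 2 * t * (L / 2 * ‖v‖ ^ 2)) t := by
    intro t
    have h1 := (hasDerivAt_id t).mul_const ⟪h' x, v⟫_ℝ
    have h2 := (hasDerivAt_pow 2 t).mul_const (L / 2 * ‖v‖ ^ 2)
    have := ((aux_deriv h h' hdiff x v t).sub h1).sub h2
    refine HasDerivAt.congr_deriv this ?_
    simp
  have ha := antitoneOn_of_deriv_nonpos (convex_Icc (0:ℝ) 1)
    (fun t _ => (hd t).continuousAt.continuousWithinAt)
    (fun t _ => (hd t).differentiableAt.differentiableWithinAt)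
    (by
      intro t ht
      rw [interior_Icc] at ht
      rw [(hd t).deriv, ← inner_sub_left]
      have h1 := real_inner_le_norm (h' (x + t • v) - h' x) v
      have h2 := hlip (x + t • v) x
      rw [add_sub_cancel_left, norm_smul, Real.norm_of_nonneg ht.1.le] at h2
      have h3 := mul_le_mul_of_nonneg_right h2 (norm_nonneg v)
      nlinarith)
  have := ha (Set.left_mem_Icc.2 zero_le_one) (Set.right_mem_Icc.2 zero_le_one) zero_le_one
  simp at this
  linarith


/-- One-step descent recursion for Nesterov's accelerated gradient method:
for a convex `h` with `L`-Lipschitz gradient and stepsizes with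
`1/α² = 1/ᾱ² + 1/α`, setting `z⁺ = z − (1/(Lα))∇h(αz + (1−α)z̄)` and
`z̄⁺ = αz⁺ + (1−α)z̄`, the Lyapunov quantity decreases. -/
theorem nesterov_one_step (d : ℕ)
    (h : EuclideanSpace ℝ (Fin d) → ℝ)
    (h' : EuclideanSpace ℝ (Fin d) → EuclideanSpace ℝ (Fin d))
    (L : ℝ) (hL : 0 < L)
    (hconv : ConvexOn ℝ Set.univ h)
    (hdiff : ∀ x, HasGradientAt h (h' x) x)
    (hlip : ∀ x x', ‖h' x - h' x'‖ ≤ L * ‖x - x'‖)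
    (ab a : ℝ) (hab0 : 0 < ab) (hab1 : ab ≤ 1) (ha0 : 0 < a) (ha1 : a ≤ 1)
    (hrel : 1 / a ^ 2 = 1 / ab ^ 2 + 1 / a)
    (zb z : EuclideanSpace ℝ (Fin d)) :
    ∀ w : EuclideanSpace ℝ (Fin d),
      L / 2 * ‖(z - (1 / (L * a)) • h' (a • z + (1 - a) • zb)) - w‖ ^ 2 +
        (1 / a ^ 2) *
          (h (a • (z - (1 / (L * a)) • h' (a • z + (1 - a) • zb)) + (1 - a) • zb) - h w) ≤
      L / 2 * ‖z - w‖ ^ 2 + (1 / ab ^ 2) * (h zb - h w) := by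
  intro w
  set y := a • z + (1 - a) • zb with hy
  set g := h' y with hg
  have e1 : a • (z - (1 / (L * a)) • g) + (1 - a) • zb = y + (-(1 / L)) • g := by
    have : a * (1 / (L * a)) = 1 / L := by field_simp
    rw [smul_sub, smul_smul, this, hy]
    module
  have e2 : z - (1 / (L * a)) • g - w = (z - w) - (1 / (L * a)) • g := by abel
  have hD := aux_descent h h' hdiff L hlip y ((-(1 / L)) • g)
  have hw := aux_convex h h' hdiff hconv y (w - y)
  have hb := aux_convex h h' hdiff hconv y (zb - y)
  rw [add_sub_cancel] at hw hb
  rw [← hg] at hD hw hb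
  have e3 : a * ⟪g, w - y⟫_ℝ + (1 - a) * ⟪g, zb - y⟫_ℝ = - (a * ⟪g, z - w⟫_ℝ) := by
    rw [hy]
    simp only [inner_sub_right, inner_add_right, inner_smul_right]
    ring
  have hk : h y ≤ (1 - a) * h zb + a * h w + a * ⟪g, z - w⟫_ℝ := by
    have h1 := mul_le_mul_of_nonneg_left hw ha0.le
    have h2 := mul_le_mul_of_nonneg_left hb (sub_nonneg.2 ha1)
    linarith
  rw [inner_smul_right, real_inner_self_eq_norm_sq, norm_smul, mul_pow, Real.norm_eq_abs,
    sq_abs] at hD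
  have hD' : h (y + (-(1 / L)) • g) ≤ h y - 1 / (2 * L) * ‖g‖ ^ 2 := by
    refine hD.trans (le_of_eq ?_)
    field_simp
    ring
  have hr : 1 / ab ^ 2 = (1 - a) / a ^ 2 := by
    have : (1 - a) / a ^ 2 = 1 / a ^ 2 - 1 / a := by field_simp
    rw [this]; linarith
  rw [e1, e2, hr, norm_sub_sq_real (z - w), inner_smul_right, norm_smul, mul_pow,
    Real.norm_eq_abs, sq_abs, real_inner_comm]
  have hf : h (y + (-(1 / L)) • g) - h w ≤
      (1 - a) * (h zb - h w) + a * ⟪g, z - w⟫_ℝ - 1 / (2 * L) * ‖g‖ ^ 2 := by linarith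
  have hm := mul_le_mul_of_nonneg_left hf (by positivity : 0 ≤ 1 / a ^ 2)
  have e4 : 1 / a ^ 2 * ((1 - a) * (h zb - h w) + a * ⟪g, z - w⟫_ℝ - 1 / (2 * L) * ‖g‖ ^ 2)
      = L / 2 * ‖z - w‖ ^ 2 + (1 - a) / a ^ 2 * (h zb - h w) -
        L / 2 * (‖z - w‖ ^ 2 - 2 * (1 / (L * a) * ⟪g, z - w⟫_ℝ)
          + (1 / (L * a)) ^ 2 * ‖g‖ ^ 2) := by
    field_simp
    ring
  linarith
end

section
/- Let h : ℝ^d → ℝ be convex and differentiable with L-Lipschitz gradient, L > 0. Let α : ℕ → ℝ be defined by α(0) = 1 and α(t+1) = 2/(1 + √(1 + 4/α(t)²)). Given z⁰ ∈ ℝ^d, set z̄⁰ := z⁰ and define iteratively z^{t+1} := z^t − (1/(L·α(t)))·∇h(α(t)·z^t + (1−α(t))·z̄^t) and z̄^{t+1} := α(t)·z^{t+1} + (1−α(t))·z̄^t. Then for every t ≥ 1 and every w ∈ ℝ^d: h(z̄^t) − h(w) ≤ (L·α(t−1)²/2)·‖z⁰ − w‖² ≤ (2L/(t+1)²)·‖z⁰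 − w‖². -/
section NesterovAux

variable {E : Type*} [NormedAddCommGroup E] [InnerProductSpace ℝ E] [CompleteSpace E]

lemma nest_line (h : E → ℝ) (h' : E → E) (hdiff : ∀ x, HasGradientAt h (h' x) x) (y v : E)
    (s : ℝ) : HasDerivAt (fun s : ℝ => h (y + s • v)) (inner ℝ (h' (y + s • v)) v) s := by
  have h1 := (hdiff (y + s • v)).hasFDerivAt
  have h2 : HasDerivAt (fun s : ℝ => y + s • v) v s := by
    simpa using ((hasDerivAt_id s).smul_const v).const_add y
  have h3 := h1.comp_hasDerivAt s h2
  rw [InnerProductSpace.toDual_apply_apply] at h3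
  exact h3

lemma nest_descent (h : E → ℝ) (h' : E → E) (L : ℝ)
    (hdiff : ∀ x, HasGradientAt h (h' x) x)
    (hlip : ∀ x x', ‖h' x - h' x'‖ ≤ L * ‖x - x'‖) (y v : E) :
    h (y + v) ≤ h y + inner ℝ (h' y) v + L / 2 * ‖v‖ ^ 2 := by
  have hd : ∀ s : ℝ, HasDerivAt
      (fun s : ℝ => h (y + s • v) - s * inner ℝ (h' y) v - s ^ 2 * (L / 2 * ‖v‖ ^ 2))
      (inner ℝ (h' (y + s • v)) v - inner ℝ (h' y) v - 2 * s * (L / 2 * ‖v‖ ^ 2)) s := by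
    intro s
    have h2 : HasDerivAt (fun s : ℝ => s * inner ℝ (h' y) v) (inner ℝ (h' y) v) s := by
      simpa using (hasDerivAt_id s).mul_const (inner ℝ (h' y) v)
    have h3 : HasDerivAt (fun s : ℝ => s ^ 2 * (L / 2 * ‖v‖ ^ 2))
        (2 * s * (L / 2 * ‖v‖ ^ 2)) s := by
      simpa using (hasDerivAt_pow 2 s).mul_const (L / 2 * ‖v‖ ^ 2)
    exact ((nest_line h h' hdiff y v s).sub h2).sub h3
  have hanti := antitoneOn_of_deriv_nonpos (convex_Icc (0 : ℝ) 1)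
    (fun s _ => (hd s).continuousAt.continuousWithinAt)
    (fun s _ => (hd s).differentiableAt.differentiableWithinAt)
    (by
      intro s hs
      rw [interior_Icc] at hs
      rw [(hd s).deriv, ← inner_sub_left]
      have h1 := real_inner_le_norm (h' (y + s • v) - h' y) v
      have h2 := hlip (y + s • v) y
      rw [add_sub_cancel_left, norm_smul, Real.norm_of_nonneg hs.1.le] at h2
      have h3 := mul_le_mul_of_nonneg_right h2 (norm_nonneg v)
      nlinarith)
  have := hanti (Set.left_mem_Icc.2 zero_le_one) (Set.right_mem_Icc.2 zero_le_one) zero_le_one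
  simp at this
  linarith

lemma nest_convex (h : E → ℝ) (h' : E → E) (hconv : ConvexOn ℝ Set.univ h)
    (hdiff : ∀ x, HasGradientAt h (h' x) x) (y x : E) :
    h y + inner ℝ (h' y) (x - y) ≤ h x := by
  have hc : ConvexOn ℝ Set.univ (fun s : ℝ => h (y + s • (x - y))) := by
    refine ⟨convex_univ, fun a _ b _ p q hp hq hpq => ?_⟩
    have := hconv.2 (Set.mem_univ (y + a • (x - y))) (Set.mem_univ (y + b • (x - y))) hp hq hpq
    convert this using 2
    have hq' : q = 1 - p := by linarith
    subst hq'
    simp only [smul_eq_mul]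
    module
  have hd := nest_line h h' hdiff y (x - y) 0
  have := hc.le_slope_of_hasDerivAt (Set.mem_univ 0) (Set.mem_univ 1) zero_lt_one hd
  simp [slope_def_field] at this
  linarith

lemma nest_step (h : E → ℝ) (h' : E → E) (L : ℝ) (hL : 0 < L)
    (hconv : ConvexOn ℝ Set.univ h)
    (hdiff : ∀ x, HasGradientAt h (h' x) x)
    (hlip : ∀ x x', ‖h' x - h' x'‖ ≤ L * ‖x - x'‖)
    (a : ℝ) (ha : 0 < a) (ha1 : a ≤ 1) (z zb z' w : E)
    (hz : z' = z - (1 / (L * a)) • h' (a • z + (1 - a) • zb)) :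
    h (a • z' + (1 - a) • zb) - h w ≤ (1 - a) * (h zb - h w)
      + L * a ^ 2 / 2 * (‖z - w‖ ^ 2 - ‖z' - w‖ ^ 2) := by
  set y := a • z + (1 - a) • zb with hy
  set g := h' y with hg
  have e1 : a • z' + (1 - a) • zb = y + (-(1 / L)) • g := by
    rw [hz, hy]
    have : a * (1 / (L * a)) = 1 / L := by field_simp
    rw [smul_sub, smul_smul, this]
    module
  have d1 := nest_descent h h' L hdiff hlip y ((-(1 / L)) • g)
  rw [← hg, inner_smul_right, real_inner_self_eq_norm_sq, norm_smul, mul_pow, Real.norm_eq_abs,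
    sq_abs] at d1
  have c1 := nest_convex h h' hconv hdiff y w
  have c2 := nest_convex h h' hconv hdiff y zb
  have e2 : a * inner ℝ g (w - y) + (1 - a) * inner ℝ g (zb - y) = - (a * inner ℝ g (z - w)) := by
    rw [← inner_smul_right, ← inner_smul_right, ← inner_smul_right, ← inner_add_right,
      ← inner_neg_right]
    congr 1
    rw [hy]
    module
  have e3 : ‖z' - w‖ ^ 2 = ‖z - w‖ ^ 2 - 2 * (1 / (L * a) * inner ℝ g (z - w))
      + (1 / (L * a)) ^ 2 * ‖g‖ ^ 2 := by
    have : z' - w = (z - w) - (1 / (L * a)) • g := by rw [hz]; abel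
    rw [this, norm_sub_sq_real, inner_smul_right, norm_smul, mul_pow, Real.norm_eq_abs, sq_abs,
      real_inner_comm]
  have e4 : L * a ^ 2 / 2 * (‖z - w‖ ^ 2 - ‖z' - w‖ ^ 2)
      = a * inner ℝ g (z - w) - 1 / (2 * L) * ‖g‖ ^ 2 := by
    rw [e3]; field_simp; ring
  have e5 : -(1 / L) * ‖g‖ ^ 2 + L / 2 * ((-(1 / L)) ^ 2 * ‖g‖ ^ 2) = - (1 / (2 * L) * ‖g‖ ^ 2) := by
    field_simp; ring
  rw [e1, e4]
  have c1' := mul_le_mul_of_nonneg_left c1 ha.le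
  have c2' := mul_le_mul_of_nonneg_left c2 (sub_nonneg.2 ha1)
  rw [← hg] at c1' c2'
  linarith

end NesterovAux

lemma nest_alpha (a b : ℝ) (ha : 0 < a) (hb : b = 2 / (1 + Real.sqrt (1 + 4 / a ^ 2))) :
    0 < b ∧ b ≤ 1 ∧ (1 - b) * a ^ 2 = b ^ 2 ∧ 1 / a + 1 / 2 ≤ 1 / b := by
  have hp : 0 < 4 / a ^ 2 := by positivity
  have hs2 := Real.sq_sqrt (show 0 ≤ 1 + 4 / a ^ 2 by positivity)
  have hs1 : 1 ≤ Real.sqrt (1 + 4 / a ^ 2) := Real.one_le_sqrt.2 (by linarith)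
  have hs3 : 2 / a ≤ Real.sqrt (1 + 4 / a ^ 2) := by
    apply Real.le_sqrt_of_sq_le
    rw [div_pow]; norm_num
  set s := Real.sqrt (1 + 4 / a ^ 2)
  have hs0 : 0 < 1 + s := by linarith
  have key : (s ^ 2 - 1) * a ^ 2 = 4 := by rw [hs2]; field_simp; ring
  refine ⟨by rw [hb]; positivity, by rw [hb, div_le_one hs0]; linarith, ?_, ?_⟩
  · rw [hb]; field_simp; linarith
  · rw [hb, one_div_div]
    have : 1 / a = 2 / a / 2 := by ring
    linarith

/-- Convergence of Nesterov's accelerated gradient method for a convex function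
with `L`-Lipschitz gradient: `h(z̄^t) − h(w) ≤ (Lα(t−1)²/2)‖z⁰ − w‖² ≤
(2L/(t+1)²)‖z⁰ − w‖²` for all `t ≥ 1`. -/
theorem nesterov_convergence (d : ℕ)
    (h : EuclideanSpace ℝ (Fin d) → ℝ)
    (h' : EuclideanSpace ℝ (Fin d) → EuclideanSpace ℝ (Fin d))
    (L : ℝ) (hL : 0 < L)
    (hconv : ConvexOn ℝ Set.univ h)
    (hdiff : ∀ x, HasGradientAt h (h' x) x)
    (hlip : ∀ x x', ‖h' x - h' x'‖ ≤ L * ‖x - x'‖)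
    (α : ℕ → ℝ) (hα0 : α 0 = 1)
    (hαrec : ∀ t, α (t + 1) = 2 / (1 + Real.sqrt (1 + 4 / (α t) ^ 2)))
    (z zb : ℕ → EuclideanSpace ℝ (Fin d)) (hzb0 : zb 0 = z 0)
    (hz : ∀ t, z (t + 1) = z t - (1 / (L * α t)) • h' (α t • z t + (1 - α t) • zb t))
    (hzb : ∀ t, zb (t + 1) = α t • z (t + 1) + (1 - α t) • zb t) :
    ∀ t : ℕ, 1 ≤ t → ∀ w : EuclideanSpace ℝ (Fin d),
      h (zb t) - h w ≤ L * (α (t - 1)) ^ 2 / 2 * ‖z 0 - w‖ ^ 2 ∧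
      L * (α (t - 1)) ^ 2 / 2 * ‖z 0 - w‖ ^ 2 ≤ 2 * L / ((t : ℝ) + 1) ^ 2 * ‖z 0 - w‖ ^ 2 := by
  have hA : ∀ t, 0 < α t ∧ α t ≤ 1 ∧ ((t : ℝ) + 2) / 2 ≤ 1 / α t := by
    intro t
    induction t with
    | zero => simp [hα0]
    | succ n ih =>
      obtain ⟨p1, p2, _, p4⟩ := nest_alpha _ _ ih.1 (hαrec n)
      refine ⟨p1, p2, ?_⟩
      push_cast
      linarith [ih.2.2]
  have main : ∀ (t : ℕ) (w : EuclideanSpace ℝ (Fin d)),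
      h (zb (t + 1)) - h w + L * α t ^ 2 / 2 * ‖z (t + 1) - w‖ ^ 2
        ≤ L * α t ^ 2 / 2 * ‖z 0 - w‖ ^ 2 := by
    intro t w
    have st := fun n => nest_step h h' L hL hconv hdiff hlip (α n) (hA n).1 (hA n).2.1 (z n) (zb n)
      (z (n + 1)) w (hz n)
    simp only [← hzb] at st
    induction t with
    | zero =>
      have := st 0
      rw [hα0] at this ⊢
      linarith
    | succ n ih =>
      obtain ⟨_, p2, p3, _⟩ := nest_alpha _ _ (hA n).1 (hαrec n)
      have h1 := st (n + 1)
      have h2 := mul_le_mul_of_nonneg_left ih (sub_nonneg.2 p2)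
      have e : ∀ x : ℝ, (1 - α (n + 1)) * (L * α n ^ 2 / 2 * x) = L * α (n + 1) ^ 2 / 2 * x := by
        intro x; rw [← p3]; ring
      rw [mul_add, e, e] at h2
      linarith
  intro t ht w
  obtain ⟨n, rfl⟩ := Nat.exists_eq_add_of_le' ht
  obtain ⟨a0, _, a2⟩ := hA n
  rw [Nat.add_sub_cancel]
  constructor
  · have := main n w
    have : 0 ≤ L * α n ^ 2 / 2 * ‖z (n + 1) - w‖ ^ 2 := by positivity
    linarith
  · apply mul_le_mul_of_nonneg_right _ (sq_nonneg _)
    have hn : (0 : ℝ) < (n : ℝ) + 2 := by positivity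
    have h1 : α n * ((n : ℝ) + 2) ≤ 2 := by
      rw [div_le_div_iff₀ two_pos a0] at a2; linarith
    have h2 : (α n * ((n : ℝ) + 2)) ^ 2 ≤ 2 ^ 2 := pow_le_pow_left₀ (by positivity) h1 2
    push_cast
    rw [show (n : ℝ) + 1 + 1 = n + 2 by ring, le_div_iff₀ (by positivity)]
    nlinarith
end

section
/- Let d ≥ 1, B ∈ ℝ^{d×d}, and μ̄ ≥ 0, L > 0 satisfy μ̄²·I_d ⪯ Bᵀ·B ⪯ L²·I_d. Let μx, μy ≥ 0 with μx·μy + μ̄² > 0, and let δx, δy ≥ 0. Then the matrix M := μx·μy·I_d + Bᵀ·B is invertible, and δx·μy²·‖M^{−1}e₁‖² + δy·‖B·M^{−1}e₁‖² ≥ (δx·μy² + δy·μ̄²)/(μx·μy + L²)², where e₁ is the first standard basis vector of ℝ^d. -/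
open scoped Matrix

lemma toE_norm_sq {d : ℕ} (B : Matrix (Fin d) (Fin d) ℝ) (x : EuclideanSpace ℝ (Fin d)) :
    ‖Matrix.toEuclideanLin B x‖ ^ 2 = x.ofLp ⬝ᵥ ((Bᵀ * B) *ᵥ x.ofLp) := by
  rw [EuclideanSpace.real_norm_sq_eq, ← Matrix.mulVec_mulVec, Matrix.dotProduct_mulVec,
    Matrix.vecMul_transpose]
  simp [dotProduct, sq]

lemma norm_sq_dot {d : ℕ} (x : EuclideanSpace ℝ (Fin d)) :
    ‖x‖ ^ 2 = x.ofLp ⬝ᵥ x.ofLp := by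
  rw [EuclideanSpace.real_norm_sq_eq]
  simp [dotProduct, sq]

/-- If `μ̄² I ⪯ BᵀB ⪯ L² I` and `μx μy + μ̄² > 0`, then `M = μxμy I + BᵀB` is
invertible, and `δx μy² ‖M⁻¹e₁‖² + δy ‖B M⁻¹ e₁‖² ≥ (δxμy² + δyμ̄²)/(μxμy + L²)²`. -/
theorem initial_distance_lower_bound (d : ℕ) (hd : 1 ≤ d)
    (B : Matrix (Fin d) (Fin d) ℝ) (μ L : ℝ) (hμ : 0 ≤ μ) (hL : 0 < L)
    (hlow : Matrix.PosSemidef (Bᵀ * B - μ ^ 2 • (1 : Matrix (Fin d) (Fin d) ℝ)))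
    (hup : Matrix.PosSemidef (L ^ 2 • (1 : Matrix (Fin d) (Fin d) ℝ) - Bᵀ * B))
    (μx μy δx δy : ℝ) (hμx : 0 ≤ μx) (hμy : 0 ≤ μy)
    (hpos : 0 < μx * μy + μ ^ 2) (hδx : 0 ≤ δx) (hδy : 0 ≤ δy) :
    IsUnit ((μx * μy) • (1 : Matrix (Fin d) (Fin d) ℝ) + Bᵀ * B) ∧
      δx * μy ^ 2 *
          ‖Matrix.toEuclideanLin (((μx * μy) • (1 : Matrix (Fin d) (Fin d) ℝ) + Bᵀ * B)⁻¹)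
            (EuclideanSpace.single (⟨0, by omega⟩ : Fin d) (1 : ℝ))‖ ^ 2 +
        δy *
          ‖Matrix.toEuclideanLin B
            (Matrix.toEuclideanLin (((μx * μy) • (1 : Matrix (Fin d) (Fin d) ℝ) + Bᵀ * B)⁻¹)
              (EuclideanSpace.single (⟨0, by omega⟩ : Fin d) (1 : ℝ)))‖ ^ 2 ≥
      (δx * μy ^ 2 + δy * μ ^ 2) / (μx * μy + L ^ 2) ^ 2 := by
  have hl : ∀ x : EuclideanSpace ℝ (Fin d),
      μ ^ 2 * ‖x‖ ^ 2 ≤ ‖Matrix.toEuclideanLin B x‖ ^ 2 := by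
    intro x
    have h := hlow.dotProduct_mulVec_nonneg x.ofLp
    rw [toE_norm_sq, norm_sq_dot]
    simp only [star_trivial, Matrix.sub_mulVec, Matrix.smul_mulVec, Matrix.one_mulVec,
      dotProduct_sub, dotProduct_smul, smul_eq_mul] at h
    linarith
  have hu : ∀ x : EuclideanSpace ℝ (Fin d),
      ‖Matrix.toEuclideanLin B x‖ ≤ L * ‖x‖ := by
    intro x
    have h := hup.dotProduct_mulVec_nonneg x.ofLp
    simp only [star_trivial, Matrix.sub_mulVec, Matrix.smul_mulVec, Matrix.one_mulVec,
      dotProduct_sub, dotProduct_smul, smul_eq_mul] at h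
    rw [← toE_norm_sq, ← norm_sq_dot] at h
    refine le_of_abs_le (abs_le_of_sq_le_sq ?_ (by positivity))
    rw [mul_pow]
    linarith
  have hc : 0 ≤ μx * μy := mul_nonneg hμx hμy
  have hM : IsUnit ((μx * μy) • (1 : Matrix (Fin d) (Fin d) ℝ) + Bᵀ * B) := by
    have h1 : Matrix.PosDef ((μx * μy + μ ^ 2) • (1 : Matrix (Fin d) (Fin d) ℝ)) :=
      Matrix.PosDef.one.smul hpos
    have h2 := h1.add_posSemidef hlow
    have h3 : (μx * μy + μ ^ 2) • (1 : Matrix (Fin d) (Fin d) ℝ)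
        + (Bᵀ * B - μ ^ 2 • (1 : Matrix (Fin d) (Fin d) ℝ))
        = (μx * μy) • (1 : Matrix (Fin d) (Fin d) ℝ) + Bᵀ * B := by
      rw [add_smul]; abel
    rw [h3] at h2
    exact h2.isUnit
  refine ⟨hM, ?_⟩
  generalize he : EuclideanSpace.single (⟨0, by omega⟩ : Fin d) (1 : ℝ) = e
  have hne : ‖e‖ = 1 := by rw [← he]; simp
  generalize hv : Matrix.toEuclideanLin
    (((μx * μy) • (1 : Matrix (Fin d) (Fin d) ℝ) + Bᵀ * B)⁻¹) e = v
  have hMv : e = (μx * μy) • v + Matrix.toEuclideanLin Bᵀ (Matrix.toEuclideanLin B v) := by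
    have h : ((μx * μy) • (1 : Matrix (Fin d) (Fin d) ℝ) + Bᵀ * B) *ᵥ v.ofLp = e.ofLp := by
      rw [← hv]
      simp only [Matrix.ofLp_toEuclideanLin_apply, Matrix.mulVec_mulVec]
      rw [Matrix.mul_nonsing_inv _ ((Matrix.isUnit_iff_isUnit_det _).1 hM), Matrix.one_mulVec]
    ext i
    rw [← h]
    simp [Matrix.add_mulVec, Matrix.smul_mulVec, Matrix.mulVec_mulVec]
  have hBB : ‖Matrix.toEuclideanLin Bᵀ (Matrix.toEuclideanLin B v)‖ ≤ L ^ 2 * ‖v‖ := by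
    generalize hw : Matrix.toEuclideanLin Bᵀ (Matrix.toEuclideanLin B v) = w
    have h1 : ‖w‖ ^ 2 = inner ℝ (Matrix.toEuclideanLin B v) (Matrix.toEuclideanLin B w) := by
      rw [← LinearMap.adjoint_inner_left, ← Matrix.toEuclideanLin_conjTranspose_eq_adjoint,
        Matrix.conjTranspose_eq_transpose_of_trivial, hw, real_inner_self_eq_norm_sq]
    have h2 := real_inner_le_norm (Matrix.toEuclideanLin B v) (Matrix.toEuclideanLin B w)
    have h3 := mul_le_mul (hu v) (hu w) (norm_nonneg _) (by positivity)
    rcases (norm_nonneg w).eq_or_lt with h0 | h0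
    · rw [← h0]; positivity
    · refine le_of_mul_le_mul_right ?_ h0
      nlinarith
  have hK : 1 ≤ (μx * μy + L ^ 2) * ‖v‖ := by
    rw [← hne]
    nth_rw 1 [hMv]
    refine (norm_add_le _ _).trans ?_
    rw [norm_smul, Real.norm_of_nonneg hc]
    linarith
  have hKp : 0 < μx * μy + L ^ 2 := by positivity
  have hA : 0 ≤ δx * μy ^ 2 + δy * μ ^ 2 := by positivity
  have hK2 : 1 ≤ ‖v‖ ^ 2 * (μx * μy + L ^ 2) ^ 2 := by nlinarith
  have hfin : (δx * μy ^ 2 + δy * μ ^ 2) / (μx * μy + L ^ 2) ^ 2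
      ≤ (δx * μy ^ 2 + δy * μ ^ 2) * ‖v‖ ^ 2 := by
    rw [div_le_iff₀ (by positivity), mul_assoc]
    exact le_mul_of_one_le_right hA hK2
  have := mul_le_mul_of_nonneg_left (hl v) hδy
  linarith
end
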